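/- arXiv:2511.13085 — 2 statements merged into one kernel-verified Lean document; each statement's English description precedes it below -/
import Mathlib

section
/- Let U satisfy Assumptions 1 and 3, and let Γ = (γ_k)_{k≥1} be a non-increasing step sequence with γ₁ ≤ 1/(m+L), γ_n > 0, γ_n → 0 and Σ_n γ_n = ∞. Then the decreasing-step PRLMC started at any x ∈ ℝ^d satisfies lim_{n→∞} W₂( L(Y_{t_n}^x), π ) = 0. -/
open MeasureTheory ProbabilityTheory Filter
open scoped ENNReal NNReal RealInnerProductSpace Topology BigOperators

noncomputable section

/-- Euclidean space `ℝ^d`. -/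
abbrev Euc (d : ℕ) : Type := EuclideanSpace ℝ (Fin d)

/-- Assumption 1: `U` is `C¹`, `m`-strongly convex and `L`-gradient Lipschitz
(expressed through the two-sided quadratic bound), with `∇U(0) = 0`. -/
def StrongAssumption {d : ℕ} (U : Euc d → ℝ) (m L : ℝ) : Prop :=
  ContDiff ℝ 1 U ∧ 0 < m ∧ m ≤ L ∧
  (∀ x y : Euc d,
    m / 2 * ‖x - y‖ ^ 2 ≤ U y - U x - ⟪gradient U x, y - x⟫ ∧
    U y - U x - ⟪gradient U x, y - x⟫ ≤ L / 2 * ‖x - y‖ ^ 2) ∧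
  gradient U 0 = 0

/-- Assumption 3: `U` is `C³` with third derivative uniformly bounded by `Lt`. -/
def ThirdDerivBounded {d : ℕ} (U : Euc d → ℝ) (Lt : ℝ) : Prop :=
  ContDiff ℝ 3 U ∧ ∀ x : Euc d, ‖iteratedFDeriv ℝ 3 U x‖ ≤ Lt

/-- The standard Gaussian measure on `ℝ^d`. -/
def stdGaussian (d : ℕ) : Measure (Euc d) :=
  (Measure.pi fun _ : Fin d => ProbabilityTheory.gaussianReal 0 1).map
    ⇑(EuclideanSpace.equiv (Fin d) ℝ).symm

/-- Bernoulli(p) distribution on `ℝ`, giving mass `p` to `1` and `1-p` to `0`. -/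
def bern (p : ℝ≥0∞) : Measure ℝ :=
  p • Measure.dirac (1 : ℝ) + (1 - p) • Measure.dirac (0 : ℝ)

/-- The `i`-th PRLMC midpoint. -/
def prlmcMid {d : ℕ} (U : Euc d → ℝ) (η : ℝ) (K : ℕ) (x : Euc d)
    (g : Fin K → Euc d) (i : Fin K) : Euc d :=
  x - (((i : ℝ) * η / (K : ℝ)) • gradient U x) + Real.sqrt (2 * (i : ℝ) * η / (K : ℝ)) • g i

/-- One step of the PRLMC scheme with step size `η`, Bernoulli variables `h`,
midpoint Gaussians `g` and driving Gaussian `z`. -/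
def prlmcStep {d : ℕ} (U : Euc d → ℝ) (η : ℝ) (K : ℕ) (x : Euc d)
    (h : Fin K → ℝ) (g : Fin K → Euc d) (z : Euc d) : Euc d :=
  x - η • gradient U x
    + η • ∑ i : Fin K, h i • (gradient U x - gradient U (prlmcMid U η K x g i))
    + Real.sqrt (2 * η) • z

/-- The law of the randomness used at a single step of the PRLMC scheme:
`K` i.i.d. Bernoulli(1/K) variables, `K` i.i.d. standard Gaussians for the midpoints
and one standard Gaussian. -/
def prlmcNoise (d K : ℕ) : Measure ((Fin K → ℝ) × (Fin K → Euc d) × Euc d) :=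
  (Measure.pi fun _ : Fin K => bern (K : ℝ≥0∞)⁻¹).prod
    ((Measure.pi fun _ : Fin K => stdGaussian d).prod (stdGaussian d))

/-- The one-step transition kernel `Q_η` of the PRLMC chain. -/
def prlmcKernel {d : ℕ} (U : Euc d → ℝ) (η : ℝ) (K : ℕ) (x : Euc d) : Measure (Euc d) :=
  (prlmcNoise d K).map fun r => prlmcStep U η K x r.1 r.2.1 r.2.2

/-- The law of the PRLMC chain after `n` steps, started from the distribution `μ`. -/
def prlmcIter {d : ℕ} (U : Euc d → ℝ) (η : ℝ) (K : ℕ) (μ : Measure (Euc d)) :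
    ℕ → Measure (Euc d)
  | 0 => μ
  | n + 1 => (prlmcIter U η K μ n).bind (prlmcKernel U η K)

/-- The law of the decreasing-step PRLMC chain after `n` steps (the `(k+1)`-th step uses
step size `γ (k+1)`), started from the distribution `μ`. -/
def prlmcIterVar {d : ℕ} (U : Euc d → ℝ) (K : ℕ) (γ : ℕ → ℝ) (μ : Measure (Euc d)) :
    ℕ → Measure (Euc d)
  | 0 => μ
  | n + 1 => (prlmcIterVar U K γ μ n).bind (prlmcKernel U (γ (n + 1)) K)

/-- Total variation distance. -/
def dTV {d : ℕ} (μ ν : Measure (Euc d)) : ℝ≥0∞ :=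
  ⨆ (A : Set (Euc d)) (_ : MeasurableSet A), max (μ A - ν A) (ν A - μ A)

/-- 2-Wasserstein distance. -/
def W2 {d : ℕ} (μ ν : Measure (Euc d)) : ℝ≥0∞ :=
  ⨅ (π : Measure (Euc d × Euc d)) (_ : π.map Prod.fst = μ ∧ π.map Prod.snd = ν),
    (∫⁻ p, ((‖p.1 - p.2‖₊ : ℝ≥0∞)) ^ 2 ∂π) ^ (1 / 2 : ℝ)

/-- The Gibbs measure `π(dx) ∝ exp(-U(x)) dx`. -/
def gibbs {d : ℕ} (U : Euc d → ℝ) : Measure (Euc d) :=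
  (∫⁻ x, ENNReal.ofReal (Real.exp (-U x)) ∂(volume : Measure (Euc d)))⁻¹ •
    (volume : Measure (Euc d)).withDensity fun x => ENNReal.ofReal (Real.exp (-U x))

/-- Membership in the functional class `𝒢`: `C²` functions with bounded gradient and
bounded Hessian. -/
def MemG {d : ℕ} (h : Euc d → ℝ) : Prop :=
  ContDiff ℝ 2 h ∧ (∃ M, ∀ x, ‖gradient h x‖ ≤ M) ∧
    (∃ M, ∀ x, ‖iteratedFDeriv ℝ 2 h x‖ ≤ M)

/-- The distance `d_𝒢`. -/
def dG {d : ℕ} (μ ν : Measure (Euc d)) : ℝ :=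
  sSup { r : ℝ | ∃ h : Euc d → ℝ, MemG h ∧ r = (∫ x, h x ∂μ) - ∫ x, h x ∂ν }

/-- `B` is a standard `d`-dimensional Brownian motion on `(Ω, P)`. -/
def IsBrownianMotion {Ω : Type} [MeasurableSpace Ω] {d : ℕ} (P : Measure Ω)
    (B : ℝ → Ω → Euc d) : Prop :=
  (∀ t, Measurable (B t)) ∧
  (∀ᵐ ω ∂P, B 0 ω = 0 ∧ Continuous fun t => B t ω) ∧
  (∀ s t : ℝ, 0 ≤ s → s ≤ t →
    Measure.map (fun ω => B t ω - B s ω) P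
      = Measure.map (fun z => Real.sqrt (t - s) • z) (stdGaussian d)) ∧
  (∀ τ : ℕ → ℝ, Monotone τ → 0 ≤ τ 0 →
    iIndepFun (fun (i : ℕ) ω => B (τ (i + 1)) ω - B (τ i) ω) P)

/-- `X` is a solution of the Langevin SDE `dX_t = -∇U(X_t) dt + √2 dB_t` started at `x`. -/
def SolvesLangevin {Ω : Type} [MeasurableSpace Ω] {d : ℕ} (U : Euc d → ℝ) (P : Measure Ω)
    (B X : ℝ → Ω → Euc d) (x : Euc d) : Prop :=
  (∀ t, Measurable (X t)) ∧
  ∀ᵐ ω ∂P, (Continuous fun t => X t ω) ∧ ∀ t, 0 ≤ t →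
    X t ω = x - (∫ s in (0:ℝ)..t, gradient U (X s ω)) + Real.sqrt 2 • B t ω

/-- `κ = 2mL/(m+L)`. -/
def kap (m L : ℝ) : ℝ := 2 * m * L / (m + L)

/-- Cumulative times `t_n = γ_1 + ⋯ + γ_n`. -/
def tseq (γ : ℕ → ℝ) (n : ℕ) : ℝ := ∑ k ∈ Finset.Icc 1 n, γ k

/-!
Couple PRLMC with the Metropolis-adjusted Langevin algorithm (MALA) run from stationarity, both
driven by the same Gaussian at every step. Detailed balance makes `gibbs U` exactly invariant for
MALA, whatever the step size, so the coupled pair always has the right marginals and its expected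
squared distance `e n` bounds `W₂²`. The Euler parts of both chains contract by strong convexity,
and two errors have to be absorbed. The midpoint corrections of PRLMC add a mean square `O(η³)`. A
rejected MALA move loses its displacement, of mean square `O(η)`, but the acceptance probability
is close to one: the logarithm of the acceptance ratio of a move from `y` to `w` is the
trapezoid-rule defect of `U` along the move plus `η / 4 * (‖∇U y‖ ^ 2 - ‖∇U w‖ ^ 2)`, and both are
`o(η)`, the defect because `∇U` is differentiable almost everywhere. The loss is thus `o(η²)`, and
`e (n + 1) ≤ (1 - m η) e n + η o(1)`, so `e n` tends to zero because the step sizes tend to zero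
and their sum diverges.
-/

open Asymptotics

/- AM-GM on the cross term of the square, with weights `t` and `1 / t`. -/
lemma norm_add_add_sq_le {E : Type*} [SeminormedAddCommGroup E] {t : ℝ} (ht : 0 < t) (a b c : E) :
    ‖a + b + c‖ ^ 2 ≤ (1 + t) * ‖a‖ ^ 2 + 2 * (1 + 1 / t) * (‖b‖ ^ 2 + ‖c‖ ^ 2) := by
  have hcross : 2 * (‖a‖ * ‖b + c‖) ≤ t * ‖a‖ ^ 2 + 1 / t * ‖b + c‖ ^ 2 := by
    have : t * ‖a‖ ^ 2 + 1 / t * ‖b + c‖ ^ 2 - 2 * (‖a‖ * ‖b + c‖)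
        = 1 / t * (t * ‖a‖ - ‖b + c‖) ^ 2 := by field_simp; ring
    linarith [show 0 ≤ 1 / t * (t * ‖a‖ - ‖b + c‖) ^ 2 by positivity]
  have hbc : ‖b + c‖ ^ 2 ≤ 2 * (‖b‖ ^ 2 + ‖c‖ ^ 2) :=
    (pow_le_pow_left₀ (norm_nonneg _) (norm_add_le b c) 2).trans add_sq_le
  calc ‖a + b + c‖ ^ 2
      ≤ (‖a‖ + ‖b + c‖) ^ 2 := by rw [add_assoc]; gcongr; exact norm_add_le _ _
    _ ≤ (1 + t) * ‖a‖ ^ 2 + (1 + 1 / t) * ‖b + c‖ ^ 2 := by linarith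
    _ ≤ (1 + t) * ‖a‖ ^ 2 + (1 + 1 / t) * (2 * (‖b‖ ^ 2 + ‖c‖ ^ 2)) := by gcongr
    _ = _ := by ring

section QuadraticBounds

variable {E : Type*} [NormedAddCommGroup E] [InnerProductSpace ℝ E]

lemma norm_sub_le_of_quadratic_bounds {f : E → ℝ} {G : E → E} {L : ℝ} (hL : 0 < L)
    (hlower : ∀ x y, f x + ⟪G x, y - x⟫ ≤ f y)
    (hupper : ∀ x y, f y ≤ f x + ⟪G x, y - x⟫ + L / 2 * ‖y - x‖ ^ 2) (x y : E) :
    ‖G x - G y‖ ≤ L * ‖x - y‖ := by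
  set D := G x - G y with hD
  have hstep : 1 / L * ‖D‖ ^ 2 ≤ L * ‖x - y‖ ^ 2 := by
    have h₁ := hlower y (x - (1 / L) • D)
    have h₂ := hupper x (x - (1 / L) • D)
    have h₃ := hupper y x
    have h₄ : ⟪G x, y - x⟫ = -⟪G x, x - y⟫ := by rw [← inner_neg_right, neg_sub]
    have h₅ : 1 / L * ⟪G x, D⟫ - 1 / L * ⟪G y, D⟫ = 1 / L * ‖D‖ ^ 2 := by
      rw [← mul_sub, ← inner_sub_left, ← hD, real_inner_self_eq_norm_sq]
    have h₆ : L / 2 * (1 / L * ‖D‖) ^ 2 = 1 / L * ‖D‖ ^ 2 / 2 := by field_simp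
    rw [sub_right_comm, inner_sub_right, inner_smul_right] at h₁
    rw [sub_sub_cancel_left, inner_neg_right, inner_smul_right, norm_neg, norm_smul,
      Real.norm_of_nonneg (by positivity), h₆] at h₂
    linarith
  refine (sq_le_sq₀ (norm_nonneg D) (by positivity)).1 ?_
  calc ‖D‖ ^ 2 = L * (1 / L * ‖D‖ ^ 2) := by field_simp
    _ ≤ L * (L * ‖x - y‖ ^ 2) := by gcongr
    _ = (L * ‖x - y‖) ^ 2 := by ring

lemma norm_sub_smul_sq_le {v g : E} {m L η : ℝ} (hη : 0 ≤ η) (hmono : m * ‖v‖ ^ 2 ≤ ⟪v, g⟫)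
    (hlip : ‖g‖ ≤ L * ‖v‖) :
    ‖v - η • g‖ ^ 2 ≤ (1 - 2 * m * η + L ^ 2 * η ^ 2) * ‖v‖ ^ 2 := by
  have hsq : ‖g‖ ^ 2 ≤ L ^ 2 * ‖v‖ ^ 2 := by rw [← mul_pow]; gcongr
  rw [norm_sub_sq_real, inner_smul_right, norm_smul, mul_pow, Real.norm_eq_abs, sq_abs]
  linarith [mul_le_mul_of_nonneg_left hmono hη, mul_le_mul_of_nonneg_left hsq (sq_nonneg η)]

end QuadraticBounds

section Trapezoid

variable {E F : Type*} [NormedAddCommGroup E] [NormedSpace ℝ E] [NormedAddCommGroup F]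
  [NormedSpace ℝ F] {f : E → F} {f' : E → E →L[ℝ] F} {f'' : E →L[ℝ] E →L[ℝ] F} {x : E}

lemma taylor_two_isLittleO (hf : ∀ y, HasFDerivAt f (f' y) y) (hf' : HasFDerivAt f' f'' x) :
    (fun v => f (x + v) - f x - f' x v - (1 / 2 : ℝ) • f'' v v) =o[𝓝 0] fun v => ‖v‖ ^ 2 := by
  refine isLittleO_iff.2 fun ε hε => ?_
  obtain ⟨δ, hδ, hball⟩ := Metric.eventually_nhds_iff_ball.1
    (isLittleO_iff.1 (hasFDerivAt_iff_isLittleO_nhds_zero.1 hf') hε)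
  filter_upwards [Metric.ball_mem_nhds 0 hδ] with v hv
  have hderiv (t : ℝ) : HasDerivAt
      (fun t : ℝ => f (x + t • v) - t • f' x v - (t ^ 2 / 2) • f'' v v)
      ((f' (x + t • v) - f' x - f'' (t • v)) v) t := by
    have hline : HasDerivAt (fun t : ℝ => x + t • v) v t := by
      simpa using ((hasDerivAt_id t).smul_const v).const_add x
    have hsq : HasDerivAt (fun t : ℝ => t ^ 2 / 2) t t := by
      simpa using ((hasDerivAt_id t).pow 2).div_const 2
    refine ((((hf _).comp_hasDerivAt t hline).sub
      ((hasDerivAt_id t).smul_const (f' x v))).sub (hsq.smul_const (f'' v v))).congr_deriv ?_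
    simp
  have hbound : ∀ t ∈ Set.Ico (0 : ℝ) 1,
      ‖(f' (x + t • v) - f' x - f'' (t • v)) v‖ ≤ ε * ‖v‖ ^ 2 := by
    intro t ⟨ht0, ht1⟩
    have htv : ‖t • v‖ ≤ ‖v‖ := by
      rw [norm_smul, Real.norm_of_nonneg ht0]
      exact mul_le_of_le_one_left (norm_nonneg v) ht1.le
    calc ‖(f' (x + t • v) - f' x - f'' (t • v)) v‖
        ≤ ε * ‖t • v‖ * ‖v‖ := ContinuousLinearMap.le_of_opNorm_le _
          (hball _ (by simpa using htv.trans_lt (by simpa using hv))) v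
      _ ≤ ε * ‖v‖ * ‖v‖ := by gcongr
      _ = ε * ‖v‖ ^ 2 := by ring
  have hmean := norm_image_sub_le_of_norm_deriv_le_segment_01'
    (fun t _ => (hderiv t).hasDerivWithinAt) hbound
  simpa [sub_right_comm _ _ (f x)] using hmean

lemma trapezoid_isLittleO (hf : ∀ y, HasFDerivAt f (f' y) y) (hf' : DifferentiableAt ℝ f' x) :
    (fun v => f (x + v) - f x - (1 / 2 : ℝ) • (f' x + f' (x + v)) v)
      =o[𝓝 0] fun v => ‖v‖ ^ 2 := by
  have hincr : (fun v => (f' (x + v) - f' x - fderiv ℝ f' x v) v) =o[𝓝 0] fun v => ‖v‖ ^ 2 := by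
    simp only [sq]
    refine IsBigO.trans_isLittleO (g := fun v => ‖f' (x + v) - f' x - fderiv ℝ f' x v‖ * ‖v‖)
      (isBigO_of_le _ fun v => ?_) ?_
    · simpa using (f' (x + v) - f' x - fderiv ℝ f' x v).le_opNorm v
    · exact (hasFDerivAt_iff_isLittleO_nhds_zero.1 hf'.hasFDerivAt).norm_norm.mul_isBigO
        (isBigO_refl _ _)
  refine ((taylor_two_isLittleO hf hf'.hasFDerivAt).sub
    (hincr.const_smul_left (1 / 2 : ℝ))).congr_left fun v => ?_
  simp only [sub_apply, add_apply, Pi.smul_apply]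
  module

end Trapezoid

namespace StrongAssumption

variable {d : ℕ} {U : Euc d → ℝ} {m L : ℝ}

lemma m_pos (hU : StrongAssumption U m L) : 0 < m := hU.2.1

lemma L_pos (hU : StrongAssumption U m L) : 0 < L := hU.2.1.trans_le hU.2.2.1

lemma continuous (hU : StrongAssumption U m L) : Continuous U := hU.1.continuous

lemma lower_bound (hU : StrongAssumption U m L) (x y : Euc d) :
    m / 2 * ‖x - y‖ ^ 2 ≤ U y - U x - ⟪gradient U x, y - x⟫ := (hU.2.2.2.1 x y).1

lemma upper_bound (hU : StrongAssumption U m L) (x y : Euc d) :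
    U y - U x - ⟪gradient U x, y - x⟫ ≤ L / 2 * ‖x - y‖ ^ 2 := (hU.2.2.2.1 x y).2

lemma gradient_zero (hU : StrongAssumption U m L) : gradient U 0 = 0 := hU.2.2.2.2

lemma add_mul_norm_sq_le (hU : StrongAssumption U m L) (x : Euc d) :
    U 0 + m / 2 * ‖x‖ ^ 2 ≤ U x := by
  have := hU.lower_bound 0 x
  simp only [hU.gradient_zero, inner_zero_left, sub_zero, zero_sub, norm_neg] at this
  linarith

lemma norm_gradient_sub_le (hU : StrongAssumption U m L) (x y : Euc d) :
    ‖gradient U x - gradient U y‖ ≤ L * ‖x - y‖ := by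
  refine norm_sub_le_of_quadratic_bounds (f := U) hU.L_pos (fun x y => ?_) (fun x y => ?_) x y
  · have : 0 ≤ m / 2 * ‖x - y‖ ^ 2 := mul_nonneg (half_pos hU.m_pos).le (sq_nonneg _)
    linarith [hU.lower_bound x y]
  · linarith [norm_sub_rev x y ▸ hU.upper_bound x y]

lemma norm_gradient_le (hU : StrongAssumption U m L) (x : Euc d) : ‖gradient U x‖ ≤ L * ‖x‖ := by
  simpa [hU.gradient_zero] using hU.norm_gradient_sub_le x 0

lemma lipschitzWith_gradient (hU : StrongAssumption U m L) :
    LipschitzWith L.toNNReal (gradient U) :=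
  LipschitzWith.of_dist_le_mul fun x y => by
    simpa only [dist_eq_norm, Real.coe_toNNReal L hU.L_pos.le] using hU.norm_gradient_sub_le x y

lemma continuous_gradient (hU : StrongAssumption U m L) : Continuous (gradient U) :=
  hU.lipschitzWith_gradient.continuous

lemma le_inner_gradient_sub (hU : StrongAssumption U m L) (x y : Euc d) :
    m * ‖x - y‖ ^ 2 ≤ ⟪x - y, gradient U x - gradient U y⟫ := by
  have h₁ := hU.lower_bound x y
  have h₂ := norm_sub_rev x y ▸ hU.lower_bound y x
  rw [← neg_sub x y, inner_neg_right] at h₁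
  rw [real_inner_comm, inner_sub_left]
  linarith

lemma norm_euler_sub_sq_le (hU : StrongAssumption U m L) {η : ℝ} (hη : 0 ≤ η) (x y : Euc d) :
    ‖(x - η • gradient U x) - (y - η • gradient U y)‖ ^ 2
      ≤ (1 - 2 * m * η + L ^ 2 * η ^ 2) * ‖x - y‖ ^ 2 := by
  rw [sub_sub_sub_comm, ← smul_sub]
  exact norm_sub_smul_sq_le hη (hU.le_inner_gradient_sub x y) (hU.norm_gradient_sub_le x y)

lemma abs_trapezoid_le (hU : StrongAssumption U m L) (x y : Euc d) :
    |U y - U x - 1 / 2 * ⟪gradient U x + gradient U y, y - x⟫| ≤ L / 4 * ‖y - x‖ ^ 2 := by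
  have h₁ := norm_sub_rev x y ▸ hU.lower_bound x y
  have h₂ := norm_sub_rev x y ▸ hU.upper_bound x y
  have h₃ := hU.lower_bound y x
  have h₄ := hU.upper_bound y x
  have hpos : 0 ≤ m / 2 * ‖y - x‖ ^ 2 := mul_nonneg (half_pos hU.m_pos).le (sq_nonneg _)
  rw [← neg_sub y x, inner_neg_right] at h₃ h₄
  rw [inner_add_left, abs_le]
  constructor <;> linarith

lemma ae_trapezoid_isLittleO (hU : StrongAssumption U m L) :
    ∀ᵐ x, (fun v => U (x + v) - U x - 1 / 2 * ⟪gradient U x + gradient U (x + v), v⟫)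
      =o[𝓝 0] fun v => ‖v‖ ^ 2 := by
  filter_upwards [hU.lipschitzWith_gradient.ae_differentiableAt (μ := volume)] with x hx
  have hfderiv (y : Euc d) :
      HasFDerivAt U (InnerProductSpace.toDual ℝ (Euc d) (gradient U y)) y :=
    (hU.1.differentiable one_ne_zero y).hasGradientAt.hasFDerivAt
  have hdiff : DifferentiableAt ℝ
      (fun y => InnerProductSpace.toDual ℝ (Euc d) (gradient U y)) x :=
    (InnerProductSpace.toDual ℝ (Euc d)).toContinuousLinearEquiv.differentiableAt.comp x hx
  simpa [inner_add_left] using trapezoid_isLittleO hfderiv hdiff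

end StrongAssumption

section Recursion

lemma le_exp_neg_sum_mul {u a : ℕ → ℝ} {C : ℝ} (hC : 0 ≤ C) (h₀ : u 0 ≤ C) (ha : ∀ n, a n ≤ 1)
    (h : ∀ n, u (n + 1) ≤ (1 - a n) * u n) (n : ℕ) :
    u n ≤ Real.exp (-∑ i ∈ Finset.range n, a i) * C := by
  induction n with
  | zero => simpa using h₀
  | succ n ih =>
    calc u (n + 1) ≤ (1 - a n) * u n := h n
      _ ≤ (1 - a n) * (Real.exp (-∑ i ∈ Finset.range n, a i) * C) :=
          mul_le_mul_of_nonneg_left ih (sub_nonneg.2 (ha n))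
      _ ≤ Real.exp (-a n) * (Real.exp (-∑ i ∈ Finset.range n, a i) * C) := by
          gcongr
          exact Real.one_sub_le_exp_neg (a n)
      _ = Real.exp (-∑ i ∈ Finset.range (n + 1), a i) * C := by
          rw [Finset.sum_range_succ, neg_add, Real.exp_add]
          ring

lemma tendsto_zero_of_le_one_sub_mul_add {e a b : ℕ → ℝ} (he : ∀ n, 0 ≤ e n)
    (ha : ∀ n, 0 ≤ a n) (hdiv : ¬ Summable a) (hb : Tendsto b atTop (𝓝 0))
    (h : ∀ᶠ n in atTop, a n ≤ 1 ∧ e (n + 1) ≤ (1 - a n) * e n + a n * b n) :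
    Tendsto e atTop (𝓝 0) := by
  refine tendsto_order.2 ⟨fun ε hε => .of_forall fun n => hε.trans_le (he n), fun ε hε => ?_⟩
  obtain ⟨N, hN⟩ := eventually_atTop.1 (h.and (hb.eventually_le_const (half_pos hε)))
  have hdecay := le_exp_neg_sum_mul (u := fun k => e (k + N) - ε / 2) (a := fun k => a (k + N))
    (C := e N) (he N) (by simpa using (half_pos hε).le) (fun k => (hN _ (by omega)).1.1) fun k => by
      obtain ⟨⟨-, hstep⟩, hbk⟩ := hN (k + N) (by omega)
      have := mul_le_mul_of_nonneg_left hbk (ha (k + N))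
      rw [add_right_comm]
      linarith
  have hsum : Tendsto (fun k => ∑ i ∈ Finset.range k, a (i + N)) atTop atTop :=
    (not_summable_iff_tendsto_nat_atTop_of_nonneg fun i => ha _).1
      (mt (summable_nat_add_iff N).1 hdiv)
  have hexp : Tendsto (fun k => Real.exp (-∑ i ∈ Finset.range k, a (i + N)) * e N)
      atTop (𝓝 0) := by
    simpa using (Real.tendsto_exp_neg_atTop_nhds_zero.comp hsum).mul_const (e N)
  obtain ⟨k, hk⟩ := eventually_atTop.1 (hexp.eventually_lt_const (half_pos hε))
  filter_upwards [eventually_ge_atTop (k + N)] with n hn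
  have h₁ := hk (n - N) (by omega)
  have h₂ := hdecay (n - N)
  rw [Nat.sub_add_cancel (by omega)] at h₂
  linarith

lemma tendsto_zero_of_le_ofReal_mul_add {e b : ℕ → ℝ≥0∞} {a A : ℕ → ℝ} {c : ℝ} (hc : 0 < c)
    (he : e 0 ≠ ∞) (hbtop : ∀ n, b n ≠ ∞) (ha : ∀ n, 0 ≤ a n) (hdiv : ¬ Summable a)
    (hlim : Tendsto a atTop (𝓝 0)) (hb : Tendsto b atTop (𝓝 0))
    (hA : ∀ᶠ n in atTop, A n ≤ 1 - c * a n)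
    (h : ∀ n, e (n + 1) ≤ ENNReal.ofReal (A n) * e n + ENNReal.ofReal (a n) * b n) :
    Tendsto e atTop (𝓝 0) := by
  have hetop (n : ℕ) : e n ≠ ∞ := by
    induction n with
    | zero => exact he
    | succ n ih =>
      exact ne_top_of_le_ne_top (ENNReal.add_ne_top.2
        ⟨ENNReal.mul_ne_top ENNReal.ofReal_ne_top ih,
          ENNReal.mul_ne_top ENNReal.ofReal_ne_top (hbtop n)⟩) (h n)
  have hca : ∀ᶠ n in atTop, c * a n ≤ 1 := by
    simpa using (hlim.const_mul c).eventually_le_const (by simp : c * 0 < 1)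
  have hb' : Tendsto (fun n => c⁻¹ * (b n).toReal) atTop (𝓝 0) := by
    simpa using ((ENNReal.tendsto_toReal_zero_iff hbtop).2 hb).const_mul c⁻¹
  refine (ENNReal.tendsto_toReal_zero_iff hetop).1 <|
    tendsto_zero_of_le_one_sub_mul_add (a := fun n => c * a n) (fun n => ENNReal.toReal_nonneg)
      (fun n => mul_nonneg hc.le (ha n)) (mt (summable_mul_left_iff hc.ne').1 hdiv) hb' ?_
  filter_upwards [hca, hA] with n hcan hAn
  have hstep : (e (n + 1)).toReal
      ≤ (ENNReal.ofReal (1 - c * a n) * e n + ENNReal.ofReal (a n) * b n).toReal :=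
    ENNReal.toReal_mono
      (ENNReal.add_ne_top.2 ⟨ENNReal.mul_ne_top ENNReal.ofReal_ne_top (hetop n),
        ENNReal.mul_ne_top ENNReal.ofReal_ne_top (hbtop n)⟩)
      ((h n).trans (by gcongr))
  rw [ENNReal.toReal_add (ENNReal.mul_ne_top ENNReal.ofReal_ne_top (hetop n))
      (ENNReal.mul_ne_top ENNReal.ofReal_ne_top (hbtop n)), ENNReal.toReal_mul,
    ENNReal.toReal_mul, ENNReal.toReal_ofReal (sub_nonneg.2 hcan),
    ENNReal.toReal_ofReal (ha n)] at hstep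
  refine ⟨hcan, hstep.trans_eq ?_⟩
  field_simp

end Recursion

section GibbsMeasure

variable {d : ℕ}

lemma integrable_exp_neg_mul_sq_norm {E : Type*} [NormedAddCommGroup E] [InnerProductSpace ℝ E]
    [FiniteDimensional ℝ E] [MeasurableSpace E] [BorelSpace E] {c : ℝ} (hc : 0 < c) :
    Integrable (fun z : E => Real.exp (-(c * ‖z‖ ^ 2))) := by
  refine (GaussianFourier.integrable_cexp_neg_mul_sq_norm_add (V := E) (b := (c : ℂ))
    (by simpa using hc) 0 0).norm.congr (.of_forall fun z => ?_)
  simp [Complex.norm_exp, ← Complex.ofReal_pow]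

/- Complete the square in `n * r` after bounding `1 + r ≤ exp r`. -/
lemma one_add_pow_mul_exp_neg_le {c r : ℝ} (hc : 0 < c) (hr : 0 ≤ r) (n : ℕ) :
    (1 + r) ^ n * Real.exp (-(c * r ^ 2))
      ≤ Real.exp (n ^ 2 / (2 * c)) * Real.exp (-(c / 2 * r ^ 2)) := by
  have hsq : n * r - c * r ^ 2 ≤ n ^ 2 / (2 * c) - c / 2 * r ^ 2 := by
    have : n ^ 2 / (2 * c) - c / 2 * r ^ 2 - (n * r - c * r ^ 2) = (n - c * r) ^ 2 / (2 * c) := by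
      field_simp
      ring
    linarith [show 0 ≤ (n - c * r) ^ 2 / (2 * c) by positivity]
  calc (1 + r) ^ n * Real.exp (-(c * r ^ 2))
      ≤ Real.exp r ^ n * Real.exp (-(c * r ^ 2)) := by
        gcongr
        linarith [Real.add_one_le_exp r]
    _ = Real.exp (n * r - c * r ^ 2) := by rw [← Real.exp_nat_mul, ← Real.exp_add, sub_eq_add_neg]
    _ ≤ Real.exp (n ^ 2 / (2 * c) - c / 2 * r ^ 2) := Real.exp_le_exp.2 hsq
    _ = _ := by rw [sub_eq_add_neg, Real.exp_add]

variable {V : Euc d → ℝ} {b c : ℝ}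

lemma lintegral_one_add_norm_pow_mul_exp_neg_lt_top (hc : 0 < c)
    (hV : ∀ z, b + c * ‖z‖ ^ 2 ≤ V z) (n : ℕ) :
    ∫⁻ z, ENNReal.ofReal (Real.exp (-V z)) * ENNReal.ofReal ((1 + ‖z‖) ^ n) < ∞ := by
  refine (lintegral_mono fun z => ?_).trans_lt
    (((integrable_exp_neg_mul_sq_norm (E := Euc d) (half_pos hc)).const_mul
      (Real.exp (-b) * Real.exp (n ^ 2 / (2 * c)))).lintegral_lt_top)
  rw [← ENNReal.ofReal_mul (Real.exp_nonneg _)]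
  refine ENNReal.ofReal_le_ofReal ?_
  calc Real.exp (-V z) * (1 + ‖z‖) ^ n
      ≤ Real.exp (-(b + c * ‖z‖ ^ 2)) * (1 + ‖z‖) ^ n := by gcongr; exact hV z
    _ = Real.exp (-b) * ((1 + ‖z‖) ^ n * Real.exp (-(c * ‖z‖ ^ 2))) := by
        rw [neg_add, Real.exp_add]
        ring
    _ ≤ Real.exp (-b) * (Real.exp (n ^ 2 / (2 * c)) * Real.exp (-(c / 2 * ‖z‖ ^ 2))) := by
        gcongr ?_ * ?_
        exact one_add_pow_mul_exp_neg_le hc (norm_nonneg z) n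
    _ = _ := by ring

lemma lintegral_exp_neg_ne_zero (hVm : Measurable V) :
    ∫⁻ z, ENNReal.ofReal (Real.exp (-V z)) ≠ 0 := by
  have hsupport : Function.support (fun z => ENNReal.ofReal (Real.exp (-V z))) = Set.univ :=
    Set.eq_univ_of_forall fun z => by simp [Real.exp_pos]
  refine ((lintegral_pos_iff_support (by fun_prop)).2 ?_).ne'
  rw [hsupport]
  exact NeZero.pos _

lemma isProbabilityMeasure_gibbs (hVm : Measurable V) (hc : 0 < c)
    (hV : ∀ z, b + c * ‖z‖ ^ 2 ≤ V z) : IsProbabilityMeasure (gibbs V) where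
  measure_univ := by
    have := lintegral_one_add_norm_pow_mul_exp_neg_lt_top hc hV 0
    simp only [pow_zero, ENNReal.ofReal_one, mul_one] at this
    rw [gibbs, Measure.smul_apply, withDensity_apply _ .univ, Measure.restrict_univ, smul_eq_mul,
      ENNReal.inv_mul_cancel (lintegral_exp_neg_ne_zero hVm) this.ne]

lemma gibbs_absolutelyContinuous : gibbs V ≪ volume :=
  (withDensity_absolutelyContinuous _ _).smul_left _

lemma lintegral_one_add_norm_pow_gibbs_lt_top (hVm : Measurable V) (hc : 0 < c)
    (hV : ∀ z, b + c * ‖z‖ ^ 2 ≤ V z) (n : ℕ) :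
    ∫⁻ z, ENNReal.ofReal ((1 + ‖z‖) ^ n) ∂gibbs V < ∞ := by
  rw [gibbs, lintegral_smul_measure, lintegral_withDensity_eq_lintegral_mul _ (by fun_prop)
    (by fun_prop)]
  exact ENNReal.mul_lt_top (ENNReal.inv_ne_top.2 (lintegral_exp_neg_ne_zero hVm)).lt_top
    (lintegral_one_add_norm_pow_mul_exp_neg_lt_top hc hV n)

lemma charFun_gibbs (hVm : Measurable V) (t : Euc d) :
    charFun (gibbs V) t = (∫ z, (Real.exp (-V z) : ℂ))⁻¹
      * ∫ z, (Real.exp (-V z) : ℂ) * Complex.exp (⟪z, t⟫ * Complex.I) := by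
  have hnorm : (∫⁻ z, ENNReal.ofReal (Real.exp (-V z))).toReal = ∫ z, Real.exp (-V z) :=
    (integral_eq_lintegral_of_nonneg_ae (.of_forall fun z => (Real.exp_nonneg _))
      (by fun_prop)).symm
  rw [charFun_apply, gibbs, integral_smul_measure,
    integral_withDensity_eq_integral_toReal_smul (by fun_prop) (by simp)]
  simp only [ENNReal.toReal_ofReal (Real.exp_nonneg _), ENNReal.toReal_inv, hnorm,
    integral_complex_ofReal, Complex.real_smul, Complex.ofReal_inv]

lemma gibbs_norm_sq_div_two : gibbs (fun z : Euc d => ‖z‖ ^ 2 / 2) = _root_.stdGaussian d := by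
  have hprob : IsProbabilityMeasure (gibbs fun z : Euc d => ‖z‖ ^ 2 / 2) :=
    isProbabilityMeasure_gibbs (b := 0) (by fun_prop) one_half_pos fun z => by linarith
  have hstd : _root_.stdGaussian d = ProbabilityTheory.stdGaussian (Euc d) := map_pi_eq_stdGaussian
  have hfourier := GaussianFourier.integral_cexp_neg_mul_sq_norm_add (V := Euc d) (b := 1 / 2)
    (by norm_num) Complex.I
  rw [hstd]
  refine Measure.ext_of_charFun (funext fun t => ?_)
  rw [charFun_stdGaussian, charFun_gibbs (by fun_prop)]
  have h₁ : ∫ z : Euc d, (Real.exp (-(‖z‖ ^ 2 / 2)) : ℂ) = _ :=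
    (integral_congr_ae (.of_forall fun z => by simp; ring_nf)).trans (hfourier 0)
  have h₂ : ∫ z : Euc d, (Real.exp (-(‖z‖ ^ 2 / 2)) : ℂ) * Complex.exp (⟪z, t⟫ * Complex.I) = _ :=
    (integral_congr_ae (.of_forall fun z => by
      simp [← Complex.exp_add, real_inner_comm z t]; ring_nf)).trans (hfourier t)
  have hconst : ((Real.pi : ℂ) / (1 / 2)) ^ (Module.finrank ℝ (Euc d) / 2 : ℂ) ≠ 0 := by
    rw [Ne, Complex.cpow_eq_zero_iff]
    simp
  rw [h₁, h₂, mul_inv, mul_mul_mul_comm, inv_mul_cancel₀ hconst, one_mul, ← Complex.exp_neg,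
    ← Complex.exp_add]
  congr 1
  simp
  ring

instance isProbabilityMeasure_stdGaussian : IsProbabilityMeasure (_root_.stdGaussian d) :=
  gibbs_norm_sq_div_two (d := d) ▸
    isProbabilityMeasure_gibbs (b := 0) (by fun_prop) one_half_pos fun z => by linarith

lemma lintegral_one_add_norm_pow_stdGaussian_lt_top (n : ℕ) :
    ∫⁻ z, ENNReal.ofReal ((1 + ‖z‖) ^ n) ∂(_root_.stdGaussian d) < ∞ :=
  gibbs_norm_sq_div_two (d := d) ▸
    lintegral_one_add_norm_pow_gibbs_lt_top (b := 0) (by fun_prop) one_half_pos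
      (fun z => by linarith) n

end GibbsMeasure

open scoped unitInterval

section Metropolis

lemma map_withDensity_comp {α β : Type*} [MeasurableSpace α] [MeasurableSpace β]
    {μ : Measure α} {φ : α → β} {g : β → ℝ≥0∞} (hφ : Measurable φ) (hg : Measurable g) :
    (μ.withDensity fun x => g (φ x)).map φ = (μ.map φ).withDensity g := by
  refine Measure.ext_of_lintegral _ fun F hF => ?_
  rw [lintegral_map hF hφ, lintegral_withDensity_eq_lintegral_mul _ (by fun_prop) (by fun_prop),
    lintegral_withDensity_eq_lintegral_mul _ hg hF, lintegral_map (by fun_prop) hφ]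
  rfl

lemma map_snd_eq_map_fst_of_swap {α : Type*} [MeasurableSpace α] {ν : Measure α} [SFinite ν]
    {g : α × α → ℝ≥0∞} (hg : Measurable g) (hswap : ∀ p, g p.swap = g p) :
    ((ν.prod ν).withDensity g).map Prod.snd = ((ν.prod ν).withDensity g).map Prod.fst := by
  have hmap : ((ν.prod ν).withDensity g).map Prod.swap = (ν.prod ν).withDensity g := by
    conv_lhs => rw [← funext hswap]
    rw [map_withDensity_comp measurable_swap hg, Measure.prod_swap]
  conv_lhs => rw [← hmap, Measure.map_map measurable_snd measurable_swap]
  rfl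

variable {α : Type*}

/-- The Metropolis accept–reject move: from the state `p.1`, the proposal `p.2` is accepted with
probability `a p`, the randomness being a uniform variable `u` on the unit interval. -/
def metropolisMove (a : α × α → I) (p : α × α) (u : I) : α := if u ≤ a p then p.2 else p.1

variable {a : α × α → I}

lemma lintegral_metropolisMove (p : α × α) (F : α → ℝ≥0∞) :
    ∫⁻ u, F (metropolisMove a p u)
      = ENNReal.ofReal (a p) * F p.2 + ENNReal.ofReal (1 - a p) * F p.1 := by
  have haccept : ∫⁻ u in Set.Iic (a p), F (metropolisMove a p u) = ∫⁻ _ in Set.Iic (a p), F p.2 :=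
    setLIntegral_congr_fun measurableSet_Iic fun u hu => by
      rw [metropolisMove, if_pos (Set.mem_Iic.1 hu)]
  have hreject : ∫⁻ u in Set.Ioi (a p), F (metropolisMove a p u) = ∫⁻ _ in Set.Ioi (a p), F p.1 :=
    setLIntegral_congr_fun measurableSet_Ioi fun u hu => by
      rw [metropolisMove, if_neg (not_le.2 hu)]
  rw [← lintegral_add_compl _ (measurableSet_Iic (a := a p)), Set.compl_Iic, haccept, hreject,
    setLIntegral_const, setLIntegral_const, unitInterval.volume_Iic, unitInterval.volume_Ioi,
    mul_comm (F p.2), mul_comm (F p.1)]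

variable [MeasurableSpace α]

lemma measurable_metropolisMove (ha : Measurable a) :
    Measurable fun q : (α × α) × I => metropolisMove a q.1 q.2 :=
  Measurable.ite (measurableSet_le measurable_snd (by fun_prop)) (by fun_prop) (by fun_prop)

lemma map_metropolisMove (Q : Measure (α × α)) [SFinite Q] (ha : Measurable a) :
    (Q.prod volume).map (fun q => metropolisMove a q.1 q.2)
      = (Q.withDensity fun p => ENNReal.ofReal (a p)).map Prod.snd
        + (Q.withDensity fun p => ENNReal.ofReal (1 - a p)).map Prod.fst := by
  have hmove := measurable_metropolisMove ha
  refine Measure.ext_of_lintegral _ fun F hF => ?_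
  rw [lintegral_map hF hmove, lintegral_prod _ (by fun_prop), lintegral_add_measure,
    lintegral_map hF measurable_snd, lintegral_map hF measurable_fst,
    lintegral_withDensity_eq_lintegral_mul _ (by fun_prop) (by fun_prop),
    lintegral_withDensity_eq_lintegral_mul _ (by fun_prop) (by fun_prop),
    ← lintegral_add_left (by fun_prop)]
  exact lintegral_congr fun p => lintegral_metropolisMove p F

/- The rejected mass stays at `p.1`; under the balance hypothesis the accepted mass also has
the `p.1`-marginal, and the two add up. -/
lemma map_metropolisMove_eq_map_fst (Q : Measure (α × α)) [SFinite Q] (ha : Measurable a)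
    (hbalance : (Q.withDensity fun p => ENNReal.ofReal (a p)).map Prod.snd
      = (Q.withDensity fun p => ENNReal.ofReal (a p)).map Prod.fst) :
    (Q.prod volume).map (fun q => metropolisMove a q.1 q.2) = Q.map Prod.fst := by
  have hone : (fun p => ENNReal.ofReal (a p)) + (fun p => ENNReal.ofReal (1 - a p)) = 1 := by
    funext p
    simp [← ENNReal.ofReal_add, (a p).2.1, (a p).2.2]
  rw [map_metropolisMove Q ha, hbalance, ← Measure.map_add _ _ measurable_fst,
    ← withDensity_add_left (by fun_prop), hone, withDensity_one]

end Metropolis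

section ProposalLaw

lemma map_prod_add_smul {E : Type*} [NormedAddCommGroup E] [NormedSpace ℝ E]
    [FiniteDimensional ℝ E] [MeasurableSpace E] [BorelSpace E] (μ : Measure E)
    [μ.IsAddHaarMeasure] {b : E → E} (hb : Measurable b) {r : ℝ} (hr : r ≠ 0) :
    (μ.prod μ).map (fun q => (q.1, b q.1 + r • q.2))
      = ENNReal.ofReal |(r ^ Module.finrank ℝ E)⁻¹| • μ.prod μ := by
  rw [← Measure.prod_smul_right]
  refine ((MeasurePreserving.id μ).skew_product (g := fun y z => b y + r • z) (by fun_prop)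
    (.of_forall fun y => ?_)).map_eq
  rw [← Measure.map_addHaar_smul μ hr, ← Function.comp_def (b y + ·) (r • ·),
    ← Measure.map_map (by fun_prop) (by fun_prop), Measure.map_addHaar_smul μ hr, Measure.map_smul,
    map_add_left_eq_self]

variable {d : ℕ} {U : Euc d → ℝ} {η : ℝ}

/-- The Euler proposal of the Langevin diffusion with step size `η` and driving Gaussian `z`. -/
def eulerProposal (U : Euc d → ℝ) (η : ℝ) (y z : Euc d) : Euc d :=
  y - η • gradient U y + √(2 * η) • z

/-- The energy of a pair `(y, w)`: minus the logarithm, up to an additive constant, of the joint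
density of a state `y` with law `gibbs U` and its Euler proposal `w`. -/
def proposalEnergy (U : Euc d → ℝ) (η : ℝ) (p : Euc d × Euc d) : ℝ :=
  U p.1 + ‖p.2 - p.1 + η • gradient U p.1‖ ^ 2 / (4 * η)

/-- The logarithm of the Metropolis–Hastings ratio of the Euler proposal. -/
def logAcceptRatio (U : Euc d → ℝ) (η : ℝ) (p : Euc d × Euc d) : ℝ :=
  proposalEnergy U η p - proposalEnergy U η p.swap

/-- The Metropolis–Hastings acceptance probability of the Euler proposal. -/
def acceptProb (U : Euc d → ℝ) (η : ℝ) (p : Euc d × Euc d) : I :=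
  ⟨min 1 (Real.exp (logAcceptRatio U η p)), by positivity, min_le_left _ _⟩

/-- One step of the Metropolis-adjusted Langevin algorithm (MALA), from the state `y`, with driving
Gaussian `z` and acceptance variable `u`. -/
def malaStep (U : Euc d → ℝ) (η : ℝ) (y z : Euc d) (u : I) : Euc d :=
  metropolisMove (acceptProb U η) (y, eulerProposal U η y z) u

@[fun_prop]
lemma measurable_eulerProposal (hG : Measurable (gradient U)) :
    Measurable fun q : Euc d × Euc d => eulerProposal U η q.1 q.2 := by
  unfold eulerProposal
  fun_prop

@[fun_prop]
lemma measurable_proposalEnergy (hU : Measurable U) (hG : Measurable (gradient U)) :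
    Measurable (proposalEnergy U η) := by
  unfold proposalEnergy
  fun_prop

@[fun_prop]
lemma measurable_logAcceptRatio (hU : Measurable U) (hG : Measurable (gradient U)) :
    Measurable (logAcceptRatio U η) := by
  unfold logAcceptRatio
  fun_prop

@[fun_prop]
lemma measurable_acceptProb (hU : Measurable U) (hG : Measurable (gradient U)) :
    Measurable (acceptProb U η) := by
  unfold acceptProb
  fun_prop

lemma measurable_malaStep (hU : Measurable U) (hG : Measurable (gradient U)) :
    Measurable fun q : (Euc d × Euc d) × I => malaStep U η q.1.1 q.1.2 q.2 := by
  have hproposal : Measurable fun p : Euc d × Euc d => (p.1, eulerProposal U η p.1 p.2) :=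
    measurable_fst.prodMk (measurable_eulerProposal hG)
  exact (measurable_metropolisMove (measurable_acceptProb (η := η) hU hG)).comp
    (hproposal.prodMap measurable_id)

lemma proposalEnergy_eulerProposal (hη : 0 < η) (y z : Euc d) :
    proposalEnergy U η (y, eulerProposal U η y z) = U y + ‖z‖ ^ 2 / 2 := by
  have hnoise : eulerProposal U η y z - y + η • gradient U y = √(2 * η) • z := by
    rw [eulerProposal]
    abel
  rw [proposalEnergy, hnoise, norm_smul, mul_pow, Real.norm_eq_abs, sq_abs,
    Real.sq_sqrt (by positivity)]
  field_simp
  ring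

lemma map_proposal_eq_withDensity (hU : Measurable U) (hG : Measurable (gradient U)) (hη : 0 < η) :
    ∃ C : ℝ≥0∞, ((gibbs U).prod (_root_.stdGaussian d)).map
        (fun q => (q.1, eulerProposal U η q.1 q.2))
      = C • ((volume : Measure (Euc d)).prod volume).withDensity
          fun p => ENNReal.ofReal (Real.exp (-proposalEnergy U η p)) := by
  have hproposal : Measurable fun q : Euc d × Euc d => (q.1, eulerProposal U η q.1 q.2) :=
    measurable_fst.prodMk (measurable_eulerProposal hG)
  have hdensity (q : Euc d × Euc d) : ENNReal.ofReal (Real.exp (-U q.1))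
        * ENNReal.ofReal (Real.exp (-(‖q.2‖ ^ 2 / 2)))
      = ENNReal.ofReal (Real.exp (-proposalEnergy U η (q.1, eulerProposal U η q.1 q.2))) := by
    rw [proposalEnergy_eulerProposal hη, neg_add, Real.exp_add,
      ENNReal.ofReal_mul (Real.exp_nonneg _)]
  have hlebesgue : ((volume : Measure (Euc d)).prod volume).map
        (fun q => (q.1, eulerProposal U η q.1 q.2))
      = ENNReal.ofReal |(√(2 * η) ^ Module.finrank ℝ (Euc d))⁻¹| • volume.prod volume :=
    map_prod_add_smul volume (b := fun y => y - η • gradient U y) (by fun_prop) (by positivity)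
  rw [← gibbs_norm_sq_div_two, gibbs, gibbs, Measure.prod_smul_left, Measure.prod_smul_right,
    prod_withDensity (by fun_prop) (by fun_prop), Measure.map_smul, Measure.map_smul]
  simp only [hdensity]
  rw [map_withDensity_comp hproposal (g := fun p => .ofReal (Real.exp (-proposalEnergy U η p)))
    (by fun_prop), hlebesgue, withDensity_smul_measure, smul_smul, smul_smul]
  exact ⟨_, rfl⟩

lemma exp_neg_proposalEnergy_mul_acceptProb (p : Euc d × Euc d) :
    Real.exp (-proposalEnergy U η p) * acceptProb U η p
      = min (Real.exp (-proposalEnergy U η p)) (Real.exp (-proposalEnergy U η p.swap)) := by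
  rw [acceptProb, mul_min_of_nonneg _ _ (Real.exp_nonneg _), mul_one, ← Real.exp_add,
    logAcceptRatio]
  ring_nf

lemma map_malaStep_gibbs (hU : Measurable U) (hG : Measurable (gradient U)) (hη : 0 < η)
    [SFinite (gibbs U)] :
    (((gibbs U).prod (_root_.stdGaussian d)).prod volume).map
      (fun q => malaStep U η q.1.1 q.1.2 q.2) = gibbs U := by
  have hproposal : Measurable fun q : Euc d × Euc d => (q.1, eulerProposal U η q.1 q.2) :=
    measurable_fst.prodMk (measurable_eulerProposal hG)
  have haccept := measurable_acceptProb (η := η) hU hG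
  set Q := ((gibbs U).prod (_root_.stdGaussian d)).map
    (fun q => (q.1, eulerProposal U η q.1 q.2)) with hQ
  have hbalance : (Q.withDensity fun p => ENNReal.ofReal (acceptProb U η p)).map Prod.snd
      = (Q.withDensity fun p => ENNReal.ofReal (acceptProb U η p)).map Prod.fst := by
    obtain ⟨C, hC⟩ := map_proposal_eq_withDensity hU hG hη
    rw [hQ, hC, withDensity_smul_measure, ← withDensity_mul _ (by fun_prop) (by fun_prop),
      Measure.map_smul, Measure.map_smul, map_snd_eq_map_fst_of_swap (by fun_prop) fun p => ?_]
    simp only [Pi.mul_apply, ← ENNReal.ofReal_mul (Real.exp_nonneg _),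
      exp_neg_proposalEnergy_mul_acceptProb, Prod.swap_swap]
    rw [min_comm]
  calc (((gibbs U).prod (_root_.stdGaussian d)).prod volume).map
        (fun q => malaStep U η q.1.1 q.1.2 q.2)
      = (Q.prod volume).map (fun q => metropolisMove (acceptProb U η) q.1 q.2) := by
        rw [← Measure.map_id (μ := (volume : Measure I)), hQ,
          Measure.map_prod_map _ _ hproposal measurable_id,
          Measure.map_map (measurable_metropolisMove haccept) (hproposal.prodMap measurable_id),
          Measure.map_id]
        rfl
    _ = Q.map Prod.fst := map_metropolisMove_eq_map_fst Q haccept hbalance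
    _ = gibbs U := by
        rw [hQ, Measure.map_map measurable_fst hproposal]
        exact Measure.fst_prod

end ProposalLaw

section Rejection

variable {d : ℕ} {U : Euc d → ℝ} {m L η : ℝ}

/-- The mean squared displacement lost to rejections in one MALA step from stationarity. -/
def rejectionCost (U : Euc d → ℝ) (η : ℝ) : ℝ≥0∞ :=
  ∫⁻ q, ‖eulerProposal U η q.1.1 q.1.2 - malaStep U η q.1.1 q.1.2 q.2‖ₑ ^ 2
    ∂(((gibbs U).prod (_root_.stdGaussian d)).prod volume)

/-- An upper bound for the mean squared displacement lost to rejection at `y` when the driving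
Gaussian is `z`, namely `|log(acceptance ratio)| * ‖displacement‖²`. -/
def rejectionBound (U : Euc d → ℝ) (η : ℝ) (y z : Euc d) : ℝ :=
  |logAcceptRatio U η (y, eulerProposal U η y z)| * ‖eulerProposal U η y z - y‖ ^ 2

lemma measurable_rejectionBound (hU : Measurable U) (hG : Measurable (gradient U)) :
    Measurable fun q : Euc d × Euc d => rejectionBound U η q.1 q.2 := by
  have hproposal : Measurable fun q : Euc d × Euc d => (q.1, eulerProposal U η q.1 q.2) :=
    measurable_fst.prodMk (measurable_eulerProposal hG)
  have hratio := (measurable_logAcceptRatio (η := η) hU hG).comp hproposal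
  exact (continuous_abs.measurable.comp hratio).mul
    (((measurable_eulerProposal hG).sub measurable_fst).norm.pow_const 2)

lemma one_sub_acceptProb_le (p : Euc d × Euc d) :
    1 - (acceptProb U η p : ℝ) ≤ |logAcceptRatio U η p| := by
  have hexp := Real.add_one_le_exp (logAcceptRatio U η p)
  have habs := neg_abs_le (logAcceptRatio U η p)
  rw [sub_le_comm]
  exact le_min (by linarith [abs_nonneg (logAcceptRatio U η p)]) (by linarith)

lemma lintegral_enorm_euler_sub_mala_sq_le (y z : Euc d) :
    ∫⁻ u, ‖eulerProposal U η y z - malaStep U η y z u‖ₑ ^ 2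
      ≤ ENNReal.ofReal (rejectionBound U η y z) := by
  simp only [malaStep]
  rw [lintegral_metropolisMove (y, eulerProposal U η y z)
      (fun x => ‖eulerProposal U η y z - x‖ₑ ^ 2), sub_self, enorm_zero, zero_pow two_ne_zero,
    mul_zero, zero_add, rejectionBound, ENNReal.ofReal_mul (abs_nonneg _),
    ENNReal.ofReal_pow (norm_nonneg _), ofReal_norm]
  gcongr
  exact one_sub_acceptProb_le _

lemma measurable_enorm_euler_sub_mala_sq (hU : Measurable U) (hG : Measurable (gradient U)) :
    Measurable fun q : (Euc d × Euc d) × unitInterval =>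
      ‖eulerProposal U η q.1.1 q.1.2 - malaStep U η q.1.1 q.1.2 q.2‖ₑ ^ 2 :=
  (((measurable_eulerProposal hG).comp measurable_fst).sub
    (measurable_malaStep hU hG)).enorm.pow_const 2

lemma rejectionCost_le (hU : Measurable U) (hG : Measurable (gradient U)) :
    rejectionCost U η ≤ ∫⁻ p, ENNReal.ofReal (rejectionBound U η p.1 p.2)
      ∂((gibbs U).prod (_root_.stdGaussian d)) := by
  rw [rejectionCost,
    lintegral_prod _ (measurable_enorm_euler_sub_mala_sq hU hG).aemeasurable]
  exact lintegral_mono fun p => lintegral_enorm_euler_sub_mala_sq_le p.1 p.2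

lemma rejectionCost_div_le (hU : Measurable U) (hG : Measurable (gradient U)) (hη : 0 < η) :
    rejectionCost U η / ENNReal.ofReal (η ^ 2)
      ≤ ∫⁻ p, ENNReal.ofReal (rejectionBound U η p.1 p.2 / η ^ 2)
          ∂((gibbs U).prod (_root_.stdGaussian d)) := by
  simp only [ENNReal.ofReal_div_of_pos (pow_pos hη 2)]
  simp only [div_eq_mul_inv]
  rw [lintegral_mul_const _ (measurable_rejectionBound hU hG).ennreal_ofReal]
  gcongr
  exact rejectionCost_le hU hG

lemma logAcceptRatio_eq (hη : η ≠ 0) (y w : Euc d) :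
    logAcceptRatio U η (y, w)
      = η / 4 * (‖gradient U y‖ ^ 2 - ‖gradient U w‖ ^ 2)
        - (U w - U y - 1 / 2 * ⟪gradient U y + gradient U w, w - y⟫) := by
  have hy := norm_add_sq_real (w - y) (η • gradient U y)
  have hw := norm_sub_sq_real (w - y) (η • gradient U w)
  have hrev : ‖y - w + η • gradient U w‖ = ‖w - y - η • gradient U w‖ := by
    rw [← norm_neg, neg_add, neg_sub, ← sub_eq_add_neg]
  simp only [logAcceptRatio, proposalEnergy, Prod.swap, hrev, hy, hw, norm_smul, inner_smul_right,
    mul_pow, Real.norm_eq_abs, sq_abs, real_inner_comm (w - y), inner_add_right]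
  field_simp
  ring

namespace StrongAssumption

lemma norm_eulerProposal_sub_le (hU : StrongAssumption U m L) (hη : 0 ≤ η) (y z : Euc d) :
    ‖eulerProposal U η y z - y‖ ≤ √η * (2 + L * √η) * ((1 + ‖y‖) * (1 + ‖z‖)) := by
  have hnoise : √(2 * η) ≤ √η * 2 := by
    rw [mul_comm 2, Real.sqrt_mul hη]
    gcongr
    exact Real.sqrt_le_iff.2 ⟨by norm_num, by norm_num⟩
  have hsplit : eulerProposal U η y z - y = √(2 * η) • z - η • gradient U y := by
    rw [eulerProposal]
    abel
  have hL := hU.L_pos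
  calc ‖eulerProposal U η y z - y‖ ≤ √(2 * η) * ‖z‖ + η * ‖gradient U y‖ := by
        rw [hsplit]
        refine (norm_sub_le _ _).trans_eq ?_
        rw [norm_smul, norm_smul, Real.norm_of_nonneg (Real.sqrt_nonneg _),
          Real.norm_of_nonneg hη]
    _ ≤ √η * 2 * ‖z‖ + √η ^ 2 * (L * ‖y‖) := by
        rw [Real.sq_sqrt hη]
        gcongr
        exact hU.norm_gradient_le y
    _ = √η * (2 * ‖z‖ + L * √η * ‖y‖) := by ring
    _ ≤ √η * ((2 + L * √η) * ((1 + ‖y‖) * (1 + ‖z‖))) := by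
        gcongr
        have : 0 ≤ 2 * (1 + ‖y‖ + ‖y‖ * ‖z‖) + L * √η * (1 + ‖z‖ + ‖y‖ * ‖z‖) := by positivity
        linarith
    _ = _ := (mul_assoc _ _ _).symm

lemma abs_norm_gradient_sq_sub_le (hU : StrongAssumption U m L) (y w : Euc d) :
    |‖gradient U y‖ ^ 2 - ‖gradient U w‖ ^ 2| ≤ L ^ 2 * (‖w - y‖ * (2 * ‖y‖ + ‖w - y‖)) := by
  have hL := hU.L_pos
  have hw : ‖w‖ ≤ ‖y‖ + ‖w - y‖ := norm_le_norm_add_norm_sub' w y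
  calc |‖gradient U y‖ ^ 2 - ‖gradient U w‖ ^ 2|
      = (‖gradient U y‖ + ‖gradient U w‖) * |‖gradient U y‖ - ‖gradient U w‖| := by
        rw [sq_sub_sq, abs_mul, abs_of_nonneg (by positivity)]
    _ ≤ (L * ‖y‖ + L * (‖y‖ + ‖w - y‖)) * (L * ‖w - y‖) := by
        gcongr
        · exact hU.norm_gradient_le y
        · exact (hU.norm_gradient_le w).trans (by gcongr)
        · rw [norm_sub_rev w y]
          exact (abs_norm_sub_norm_le _ _).trans (hU.norm_gradient_sub_le y w)
    _ = _ := by ring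

lemma abs_logAcceptRatio_le (hU : StrongAssumption U m L) (hη : 0 < η) (y z : Euc d) :
    |logAcceptRatio U η (y, eulerProposal U η y z)|
      ≤ η * (L * (2 + L * √η) ^ 2 + (2 + L * √η) ^ 4) * ((1 + ‖y‖) * (1 + ‖z‖)) ^ 2 := by
  have hL := hU.L_pos
  set w := eulerProposal U η y z
  set k := 2 + L * √η with hk
  set T := (1 + ‖y‖) * (1 + ‖z‖)
  have hmove : ‖w - y‖ ≤ √η * k * T := hU.norm_eulerProposal_sub_le hη.le y z
  have hyT : ‖y‖ ≤ T := by nlinarith [norm_nonneg y, norm_nonneg z]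
  have hsq : √η ^ 2 = η := Real.sq_sqrt hη.le
  have hLk : L * √η ≤ k := by simp [hk]
  have hgrad : η * (L ^ 2 * (‖w - y‖ * (2 * ‖y‖ + ‖w - y‖)))
      ≤ η * (2 * L * k ^ 2 + k ^ 4) * T ^ 2 :=
    calc η * (L ^ 2 * (‖w - y‖ * (2 * ‖y‖ + ‖w - y‖)))
        ≤ η * (L ^ 2 * (√η * k * T * (2 * T + √η * k * T))) := by gcongr
      _ = η * (2 * L * (L * √η * k) + (L * √η) ^ 2 * k ^ 2) * T ^ 2 := by ring
      _ ≤ η * (2 * L * (k * k) + k ^ 2 * k ^ 2) * T ^ 2 := by gcongr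
      _ = _ := by ring
  have htrap : L / 4 * ‖w - y‖ ^ 2 ≤ L / 4 * (η * k ^ 2 * T ^ 2) := by
    gcongr
    exact (pow_le_pow_left₀ (norm_nonneg _) hmove 2).trans_eq (by rw [mul_pow, mul_pow, hsq])
  calc |logAcceptRatio U η (y, w)|
      ≤ η / 4 * |‖gradient U y‖ ^ 2 - ‖gradient U w‖ ^ 2| + L / 4 * ‖w - y‖ ^ 2 := by
        rw [logAcceptRatio_eq hη.ne']
        refine (abs_sub _ _).trans (add_le_add ?_ (hU.abs_trapezoid_le y w))
        rw [abs_mul, abs_of_pos (by positivity)]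
    _ ≤ 1 / 4 * (η * (2 * L * k ^ 2 + k ^ 4) * T ^ 2) + L / 4 * (η * k ^ 2 * T ^ 2) := by
        have := mul_le_mul_of_nonneg_left (hU.abs_norm_gradient_sq_sub_le y w) hη.le
        linarith
    _ ≤ _ := by
        have : 0 ≤ η * (L * k ^ 2 + 3 * k ^ 4) * T ^ 2 := by positivity
        linarith

lemma rejectionBound_le (hU : StrongAssumption U m L) (hη : 0 < η) (y z : Euc d) :
    rejectionBound U η y z
      ≤ η ^ 2 * (L * (2 + L * √η) ^ 4 + (2 + L * √η) ^ 6) * ((1 + ‖y‖) * (1 + ‖z‖)) ^ 4 := by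
  have hL := hU.L_pos
  calc rejectionBound U η y z
      ≤ η * (L * (2 + L * √η) ^ 2 + (2 + L * √η) ^ 4) * ((1 + ‖y‖) * (1 + ‖z‖)) ^ 2
          * (√η * (2 + L * √η) * ((1 + ‖y‖) * (1 + ‖z‖))) ^ 2 := by
        unfold rejectionBound
        gcongr
        · exact hU.abs_logAcceptRatio_le hη y z
        · exact hU.norm_eulerProposal_sub_le hη.le y z
    _ = _ := by
        rw [mul_pow _ ((1 + ‖y‖) * (1 + ‖z‖)), mul_pow √η, Real.sq_sqrt hη.le]
        ring

lemma isProbabilityMeasure_gibbs (hU : StrongAssumption U m L) :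
    IsProbabilityMeasure (gibbs U) :=
  _root_.isProbabilityMeasure_gibbs hU.continuous.measurable (half_pos hU.m_pos)
    hU.add_mul_norm_sq_le

lemma lintegral_moment_prod_lt_top (hU : StrongAssumption U m L) :
    ∫⁻ p, ENNReal.ofReal (((1 + ‖p.1‖) * (1 + ‖p.2‖)) ^ 4)
      ∂((gibbs U).prod (_root_.stdGaussian d)) < ∞ := by
  have := hU.isProbabilityMeasure_gibbs
  have hsplit (p : Euc d × Euc d) : ENNReal.ofReal (((1 + ‖p.1‖) * (1 + ‖p.2‖)) ^ 4)
      = ENNReal.ofReal ((1 + ‖p.1‖) ^ 4) * ENNReal.ofReal ((1 + ‖p.2‖) ^ 4) := by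
    rw [mul_pow, ENNReal.ofReal_mul (by positivity)]
  simp only [hsplit]
  rw [lintegral_prod_mul (f := fun y => .ofReal ((1 + ‖y‖) ^ 4))
    (g := fun z => .ofReal ((1 + ‖z‖) ^ 4)) (by fun_prop) (by fun_prop)]
  exact ENNReal.mul_lt_top (lintegral_one_add_norm_pow_gibbs_lt_top hU.continuous.measurable
    (half_pos hU.m_pos) hU.add_mul_norm_sq_le 4) (lintegral_one_add_norm_pow_stdGaussian_lt_top 4)

lemma rejectionCost_ne_top (hU : StrongAssumption U m L) (hη : 0 < η) :
    rejectionCost U η ≠ ∞ := by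
  have hL := hU.L_pos
  refine ((rejectionCost_le hU.continuous.measurable
    hU.continuous_gradient.measurable).trans_lt ?_).ne
  refine (lintegral_mono fun p : Euc d × Euc d => ENNReal.ofReal_le_ofReal
    (hU.rejectionBound_le hη p.1 p.2)).trans_lt ?_
  simp only [ENNReal.ofReal_mul (show 0 ≤ η ^ 2 * (L * (2 + L * √η) ^ 4 + (2 + L * √η) ^ 6) by
    positivity)]
  rw [lintegral_const_mul _ (by fun_prop)]
  exact ENNReal.mul_lt_top ENNReal.ofReal_lt_top hU.lintegral_moment_prod_lt_top

lemma eulerProposal_sub_isBigO (hU : StrongAssumption U m L) (y z : Euc d) :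
    (fun η => ‖eulerProposal U η y z - y‖ ^ 2) =O[𝓝[>] 0] fun η => η := by
  have hL := hU.L_pos
  refine IsBigO.of_bound (((2 + L * √1) * ((1 + ‖y‖) * (1 + ‖z‖))) ^ 2) ?_
  filter_upwards [Ioc_mem_nhdsGT one_pos] with η hη
  calc ‖‖eulerProposal U η y z - y‖ ^ 2‖ = ‖eulerProposal U η y z - y‖ ^ 2 :=
        Real.norm_of_nonneg (sq_nonneg _)
    _ ≤ (√η * (2 + L * √1) * ((1 + ‖y‖) * (1 + ‖z‖))) ^ 2 := by
        have := hU.norm_eulerProposal_sub_le hη.1.le y z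
        gcongr
        exact this.trans (by gcongr; exact hη.2)
    _ = _ := by
        rw [mul_assoc, mul_pow, Real.sq_sqrt hη.1.le, Real.norm_of_nonneg hη.1.le, mul_comm]

end StrongAssumption

lemma tendsto_eulerProposal_sub (y z : Euc d) :
    Tendsto (fun η => eulerProposal U η y z - y) (𝓝[>] 0) (𝓝 0) := by
  have hcont : Continuous fun η => eulerProposal U η y z - y := by
    unfold eulerProposal
    fun_prop
  exact (hcont.tendsto' 0 0 (by simp [eulerProposal])).mono_left nhdsWithin_le_nhds

namespace StrongAssumption

lemma logAcceptRatio_isLittleO (hU : StrongAssumption U m L) {y : Euc d}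
    (hy : (fun v => U (y + v) - U y - 1 / 2 * ⟪gradient U y + gradient U (y + v), v⟫)
      =o[𝓝 0] fun v => ‖v‖ ^ 2) (z : Euc d) :
    (fun η => logAcceptRatio U η (y, eulerProposal U η y z)) =o[𝓝[>] 0] fun η => η := by
  have hmove := tendsto_eulerProposal_sub (U := U) y z
  have htrap := (hy.comp_tendsto hmove).trans_isBigO (hU.eulerProposal_sub_isBigO y z)
  have hgrad : Tendsto (fun η => 1 / 4 * (‖gradient U y‖ ^ 2
      - ‖gradient U (y + (eulerProposal U η y z - y))‖ ^ 2)) (𝓝[>] 0) (𝓝 0) := by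
    have hcont : Continuous fun v =>
        1 / 4 * (‖gradient U y‖ ^ 2 - ‖gradient U (y + v)‖ ^ 2) := by
      have := hU.continuous_gradient
      fun_prop
    exact (hcont.tendsto' 0 0 (by simp)).comp hmove
  have hdrift := (isBigO_refl (fun η : ℝ => η) (𝓝[>] 0)).mul_isLittleO
    ((isLittleO_one_iff ℝ).2 hgrad)
  refine (hdrift.congr_right (fun η => mul_one η)).sub htrap |>.congr' ?_ .rfl
  filter_upwards [self_mem_nhdsWithin] with η hη
  rw [logAcceptRatio_eq (Set.mem_Ioi.1 hη).ne']
  simp only [Function.comp_apply, add_sub_cancel]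
  ring

lemma tendsto_rejectionBound_div (hU : StrongAssumption U m L) {y : Euc d}
    (hy : (fun v => U (y + v) - U y - 1 / 2 * ⟪gradient U y + gradient U (y + v), v⟫)
      =o[𝓝 0] fun v => ‖v‖ ^ 2) (z : Euc d) :
    Tendsto (fun η => rejectionBound U η y z / η ^ 2) (𝓝[>] 0) (𝓝 0) := by
  refine IsLittleO.tendsto_div_nhds_zero ?_
  simpa only [rejectionBound, sq] using
    (hU.logAcceptRatio_isLittleO hy z).abs_left.mul_isBigO (hU.eulerProposal_sub_isBigO y z)

/- By Rademacher's theorem the Lipschitz map `∇U` is differentiable almost everywhere, where the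
trapezoid rule for `U` is exact to second order; its Lipschitz bound gives the domination. -/
lemma tendsto_rejectionCost_div (hU : StrongAssumption U m L) :
    Tendsto (fun η => rejectionCost U η / ENNReal.ofReal (η ^ 2)) (𝓝[>] 0) (𝓝 0) := by
  have := hU.isProbabilityMeasure_gibbs
  have hL := hU.L_pos
  have hUm := hU.continuous.measurable
  have hGm := hU.continuous_gradient.measurable
  have hpointwise : ∀ᵐ p ∂((gibbs U).prod (_root_.stdGaussian d)),
      Tendsto (fun η => ENNReal.ofReal (rejectionBound U η p.1 p.2 / η ^ 2)) (𝓝[>] 0) (𝓝 0) := by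
    have hfst := Measure.quasiMeasurePreserving_fst (μ := gibbs U) (ν := _root_.stdGaussian d)
    filter_upwards [hfst.ae (gibbs_absolutelyContinuous.ae_le hU.ae_trapezoid_isLittleO)] with p hp
    simpa using ENNReal.tendsto_ofReal (hU.tendsto_rejectionBound_div hp p.2)
  have hlimit : Tendsto (fun η => ∫⁻ p, ENNReal.ofReal (rejectionBound U η p.1 p.2 / η ^ 2)
      ∂((gibbs U).prod (_root_.stdGaussian d))) (𝓝[>] 0) (𝓝 0) := by
    rw [← lintegral_zero (μ := (gibbs U).prod (_root_.stdGaussian d))]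
    refine tendsto_lintegral_filter_of_dominated_convergence (fun p => ENNReal.ofReal
      ((L * (2 + L * √1) ^ 4 + (2 + L * √1) ^ 6) * ((1 + ‖p.1‖) * (1 + ‖p.2‖)) ^ 4))
      (.of_forall fun η => ((measurable_rejectionBound hUm hGm).div_const _).ennreal_ofReal)
      ?_ ?_ hpointwise
    · filter_upwards [Ioc_mem_nhdsGT one_pos] with η hη
      refine .of_forall fun p => ENNReal.ofReal_le_ofReal ?_
      rw [div_le_iff₀' (pow_pos hη.1 2), ← mul_assoc]
      refine (hU.rejectionBound_le hη.1 p.1 p.2).trans ?_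
      gcongr <;> exact hη.2
    · simp only [ENNReal.ofReal_mul (show 0 ≤ L * (2 + L * √1) ^ 4 + (2 + L * √1) ^ 6 by
        positivity)]
      rw [lintegral_const_mul _ (by fun_prop)]
      exact ENNReal.mul_ne_top ENNReal.ofReal_ne_top hU.lintegral_moment_prod_lt_top.ne
  refine tendsto_of_tendsto_of_tendsto_of_le_of_le' tendsto_const_nhds hlimit
    (.of_forall fun _ => zero_le) ?_
  filter_upwards [self_mem_nhdsWithin] with η hη
  exact rejectionCost_div_le hUm hGm hη

end StrongAssumption

end Rejection

section CoupledStep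

variable {d K : ℕ} {U : Euc d → ℝ} {m L η : ℝ}

namespace StrongAssumption

lemma norm_sub_prlmcMid_le (hU : StrongAssumption U m L) (hη : 0 ≤ η) (x : Euc d)
    (g : Fin K → Euc d) (i : Fin K) :
    ‖x - prlmcMid U η K x g i‖ ≤ η * (L * ‖x‖) + √(2 * η) * ‖g i‖ := by
  have hfrac : (i : ℝ) * η / K ≤ η := by
    rw [mul_div_right_comm]
    exact mul_le_of_le_one_left hη
      (div_le_one_of_le₀ (by exact_mod_cast i.2.le) (Nat.cast_nonneg K))
  have hfrac2 : 2 * (i : ℝ) * η / K ≤ 2 * η := by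
    rw [mul_assoc, mul_div_assoc]
    gcongr
  have hsplit : x - prlmcMid U η K x g i
      = ((i : ℝ) * η / K) • gradient U x - √(2 * i * η / K) • g i := by
    rw [prlmcMid]
    abel
  rw [hsplit]
  refine (norm_sub_le _ _).trans ?_
  rw [norm_smul, norm_smul, Real.norm_of_nonneg (by positivity),
    Real.norm_of_nonneg (Real.sqrt_nonneg _)]
  gcongr
  exact hU.norm_gradient_le x

lemma norm_smul_gradient_sub_prlmcMid_sq_le (hU : StrongAssumption U m L) (hη : 0 ≤ η)
    (x : Euc d) {h : Fin K → ℝ} (g : Fin K → Euc d) {i : Fin K} (hh : |h i| ≤ 1) :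
    ‖h i • (gradient U x - gradient U (prlmcMid U η K x g i))‖ ^ 2
      ≤ 2 * L ^ 4 * η ^ 2 * ‖x‖ ^ 2 + 4 * L ^ 2 * η * ‖g i‖ ^ 2 := by
  have hL := hU.L_pos
  calc ‖h i • (gradient U x - gradient U (prlmcMid U η K x g i))‖ ^ 2
      ≤ (1 * (L * (η * (L * ‖x‖) + √(2 * η) * ‖g i‖))) ^ 2 := by
        rw [norm_smul, Real.norm_eq_abs]
        gcongr
        refine (hU.norm_gradient_sub_le _ _).trans ?_
        gcongr
        exact hU.norm_sub_prlmcMid_le hη x g i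
    _ ≤ L ^ 2 * (2 * ((η * (L * ‖x‖)) ^ 2 + (√(2 * η) * ‖g i‖) ^ 2)) := by
        rw [one_mul, mul_pow]
        gcongr
        exact add_sq_le
    _ = _ := by
        rw [mul_pow √(2 * η), Real.sq_sqrt (by positivity)]
        ring

lemma norm_sum_smul_gradient_sub_prlmcMid_sq_le (hU : StrongAssumption U m L) (hη : 0 ≤ η)
    (x : Euc d) {h : Fin K → ℝ} (g : Fin K → Euc d) (hh : ∀ i, |h i| ≤ 1) :
    ‖∑ i, h i • (gradient U x - gradient U (prlmcMid U η K x g i))‖ ^ 2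
      ≤ 2 * K ^ 2 * L ^ 4 * η ^ 2 * ‖x‖ ^ 2 + 4 * K * L ^ 2 * η * ∑ i, ‖g i‖ ^ 2 := by
  calc ‖∑ i, h i • (gradient U x - gradient U (prlmcMid U η K x g i))‖ ^ 2
      ≤ (∑ i, ‖h i • (gradient U x - gradient U (prlmcMid U η K x g i))‖) ^ 2 := by
        gcongr
        exact norm_sum_le _ _
    _ ≤ K * ∑ i, ‖h i • (gradient U x - gradient U (prlmcMid U η K x g i))‖ ^ 2 := by
        simpa using sq_sum_le_card_mul_sum_sq (s := (Finset.univ : Finset (Fin K)))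
          (f := fun i => ‖h i • (gradient U x - gradient U (prlmcMid U η K x g i))‖)
    _ ≤ K * ∑ i, (2 * L ^ 4 * η ^ 2 * ‖x‖ ^ 2 + 4 * L ^ 2 * η * ‖g i‖ ^ 2) := by
        gcongr with i
        exact hU.norm_smul_gradient_sub_prlmcMid_sq_le hη x g (hh i)
    _ = _ := by
        rw [Finset.sum_add_distrib, ← Finset.mul_sum _ _ (4 * L ^ 2 * η), Finset.sum_const,
          Finset.card_univ, Fintype.card_fin, nsmul_eq_mul]
        ring

end StrongAssumption

/-- The factor by which one step of size `η` multiplies the squared distance between PRLMC and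
MALA. -/
def contractionFactor (m L : ℝ) (K : ℕ) (η : ℝ) : ℝ :=
  (1 + m * η / 2) * (1 - 2 * m * η + L ^ 2 * η ^ 2)
    + (2 * η + 4 / m) * (4 * K ^ 2 * L ^ 4 * η ^ 3)

lemma eventually_contractionFactor_le (hm : 0 < m) (L : ℝ) (K : ℕ) :
    ∀ᶠ η in 𝓝[>] 0, contractionFactor m L K η ≤ 1 - m * η := by
  have hcont : Continuous fun η : ℝ => -(m / 2) + η * (L ^ 2 - m ^ 2 + m * L ^ 2 * η / 2
      + (2 * η + 4 / m) * (4 * K ^ 2 * L ^ 4 * η)) := by fun_prop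
  have hneg := (hcont.tendsto' 0 (-(m / 2)) (by simp)).eventually_lt_const
    (neg_neg_of_pos (half_pos hm))
  filter_upwards [nhdsWithin_le_nhds hneg, self_mem_nhdsWithin] with η hη hpos
  have := mul_nonpos_of_nonneg_of_nonpos (Set.mem_Ioi.1 hpos).le hη.le
  rw [contractionFactor]
  linarith

namespace StrongAssumption

lemma norm_prlmcStep_sub_malaStep_sq_le (hU : StrongAssumption U m L) (hη : 0 < η) (x y z : Euc d)
    {h : Fin K → ℝ} (g : Fin K → Euc d) (u : unitInterval) (hh : ∀ i, |h i| ≤ 1) :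
    ‖prlmcStep U η K x h g z - malaStep U η y z u‖ ^ 2
      ≤ contractionFactor m L K η * ‖x - y‖ ^ 2
        + η * (2 * η + 4 / m) * (4 * K ^ 2 * L ^ 4 * η ^ 2 * ‖y‖ ^ 2
          + 4 * K * L ^ 2 * η * ∑ i, ‖g i‖ ^ 2
          + ‖eulerProposal U η y z - malaStep U η y z u‖ ^ 2 / η ^ 2) := by
  have hm := hU.m_pos
  set S := ∑ i, h i • (gradient U x - gradient U (prlmcMid U η K x g i))
  set r := eulerProposal U η y z - malaStep U η y z u with hr
  set D := (x - η • gradient U x) - (y - η • gradient U y) with hD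
  set G := ∑ i, ‖g i‖ ^ 2
  have hsplit : prlmcStep U η K x h g z - malaStep U η y z u = D + η • S + r := by
    rw [prlmcStep, hr, eulerProposal, hD]
    abel
  have hx : ‖x‖ ^ 2 ≤ 2 * (‖x - y‖ ^ 2 + ‖y‖ ^ 2) := by
    refine le_trans ?_ add_sq_le
    gcongr
    simpa using norm_add_le (x - y) y
  have hSle : ‖S‖ ^ 2 ≤ 4 * K ^ 2 * L ^ 4 * η ^ 2 * (‖x - y‖ ^ 2 + ‖y‖ ^ 2)
      + 4 * K * L ^ 2 * η * G := by
    have hcoef := mul_le_mul_of_nonneg_left hx (show 0 ≤ 2 * K ^ 2 * L ^ 4 * η ^ 2 by positivity)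
    linarith [hU.norm_sum_smul_gradient_sub_prlmcMid_sq_le hη.le x g hh]
  calc ‖prlmcStep U η K x h g z - malaStep U η y z u‖ ^ 2
      ≤ (1 + m * η / 2) * ‖D‖ ^ 2 + 2 * (1 + 1 / (m * η / 2)) * (‖η • S‖ ^ 2 + ‖r‖ ^ 2) := by
        rw [hsplit]
        exact norm_add_add_sq_le (by positivity) D (η • S) r
    _ = (1 + m * η / 2) * ‖D‖ ^ 2 + η * (2 * η + 4 / m) * (‖S‖ ^ 2 + ‖r‖ ^ 2 / η ^ 2) := by
        rw [norm_smul, Real.norm_of_nonneg hη.le]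
        field_simp
        ring
    _ ≤ (1 + m * η / 2) * ((1 - 2 * m * η + L ^ 2 * η ^ 2) * ‖x - y‖ ^ 2)
        + η * (2 * η + 4 / m) * (4 * K ^ 2 * L ^ 4 * η ^ 2 * (‖x - y‖ ^ 2 + ‖y‖ ^ 2)
          + 4 * K * L ^ 2 * η * G + ‖r‖ ^ 2 / η ^ 2) := by
        gcongr
        exact hU.norm_euler_sub_sq_le hη.le x y
    _ = _ := by
        rw [contractionFactor]
        ring

end StrongAssumption

end CoupledStep

section BindMap

variable {α β γ : Type*} [MeasurableSpace α] [MeasurableSpace β] [MeasurableSpace γ]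
  {ν : Measure β} [SFinite ν] {f : α × β → γ}

lemma measurable_map_curry (hf : Measurable f) :
    Measurable fun x => ν.map fun y => f (x, y) := by
  have hmap (x : α) : ν.map (fun y => f (x, y)) = (ν.map (Prod.mk x)).map f :=
    (Measure.map_map hf measurable_prodMk_left).symm
  simp only [hmap]
  exact (Measure.measurable_map f hf).comp Measurable.map_prodMk_left

lemma bind_map_curry (μ : Measure α) [SFinite μ] (hf : Measurable f) :
    (μ.bind fun x => ν.map fun y => f (x, y)) = (μ.prod ν).map f := by
  refine Measure.ext_of_lintegral _ fun F hF => ?_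
  rw [Measure.lintegral_bind (measurable_map_curry hf).aemeasurable hF.aemeasurable,
    lintegral_map hF hf, lintegral_prod _ (by fun_prop)]
  exact lintegral_congr fun x => lintegral_map hF (by fun_prop)

end BindMap

section Noise

variable {d K : ℕ}

lemma isProbabilityMeasure_bern {p : ℝ≥0∞} (hp : p ≤ 1) : IsProbabilityMeasure (bern p) :=
  ⟨by simp [bern, add_tsub_cancel_of_le hp]⟩

lemma ae_bern_abs_le_one (p : ℝ≥0∞) : ∀ᵐ h ∂bern p, |h| ≤ 1 := by
  have hmeas : MeasurableSet {h : ℝ | |h| ≤ 1} :=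
    measurableSet_le continuous_abs.measurable measurable_const
  rw [bern, ae_add_measure_iff]
  exact ⟨Measure.ae_smul_measure ((ae_dirac_iff hmeas).2 (by simp)) _,
    Measure.ae_smul_measure ((ae_dirac_iff hmeas).2 (by simp)) _⟩

lemma isProbabilityMeasure_bern_natCast_inv (hK : 1 ≤ K) :
    IsProbabilityMeasure (bern (K : ℝ≥0∞)⁻¹) :=
  isProbabilityMeasure_bern (ENNReal.inv_le_one.2 (by exact_mod_cast hK))

lemma isProbabilityMeasure_prlmcNoise (hK : 1 ≤ K) : IsProbabilityMeasure (prlmcNoise d K) := by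
  have := isProbabilityMeasure_bern_natCast_inv hK
  unfold prlmcNoise
  infer_instance

lemma ae_prlmcNoise_abs_le_one (hK : 1 ≤ K) : ∀ᵐ r ∂prlmcNoise d K, ∀ i, |r.1 i| ≤ 1 := by
  have := isProbabilityMeasure_bern_natCast_inv hK
  refine ae_all_iff.2 fun i => ?_
  have hcoord := (measurePreserving_eval (fun _ : Fin K => bern (K : ℝ≥0∞)⁻¹) i).comp
    (measurePreserving_fst (ν := (Measure.pi fun _ : Fin K => _root_.stdGaussian d).prod
      (_root_.stdGaussian d)))
  exact hcoord.quasiMeasurePreserving.ae (ae_bern_abs_le_one _)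

lemma measurePreserving_prlmcNoise_snd (hK : 1 ≤ K) :
    MeasurePreserving Prod.snd (prlmcNoise d K)
      ((Measure.pi fun _ : Fin K => _root_.stdGaussian d).prod (_root_.stdGaussian d)) := by
  have := isProbabilityMeasure_bern_natCast_inv hK
  exact measurePreserving_snd

lemma measurePreserving_prlmcNoise_mid (hK : 1 ≤ K) (i : Fin K) :
    MeasurePreserving (fun r => r.2.1 i) (prlmcNoise d K) (_root_.stdGaussian d) :=
  ((measurePreserving_eval (fun _ : Fin K => _root_.stdGaussian d) i).comp
    measurePreserving_fst).comp (measurePreserving_prlmcNoise_snd hK)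

lemma measurePreserving_prlmcNoise_driving (hK : 1 ≤ K) :
    MeasurePreserving (fun r => r.2.2) (prlmcNoise d K) (_root_.stdGaussian d) :=
  measurePreserving_snd.comp (measurePreserving_prlmcNoise_snd hK)

end Noise

section Coupling

variable {d K : ℕ} {U : Euc d → ℝ} {η : ℝ} {ρ : Measure (Euc d × Euc d)}

/-- The joint law of all the randomness of a coupled step: a pair of states with law `ρ`, the PRLMC
noise, and a uniform acceptance variable. -/
def couplingInput (K : ℕ) (ρ : Measure (Euc d × Euc d)) :
    Measure ((Euc d × Euc d) × ((Fin K → ℝ) × (Fin K → Euc d) × Euc d) × unitInterval) :=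
  ρ.prod ((prlmcNoise d K).prod volume)

/-- The coupled step: PRLMC moves the first state and MALA the second one, with the same driving
Gaussian. -/
def couplingStep (U : Euc d → ℝ) (η : ℝ)
    (q : (Euc d × Euc d) × ((Fin K → ℝ) × (Fin K → Euc d) × Euc d) × unitInterval) :
    Euc d × Euc d :=
  (prlmcStep U η K q.1.1 q.2.1.1 q.2.1.2.1 q.2.1.2.2, malaStep U η q.1.2 q.2.1.2.2 q.2.2)

/-- The joint law of the coupled chains one step of size `η` after having joint law `ρ`. -/
def nextCoupling (U : Euc d → ℝ) (K : ℕ) (η : ℝ) (ρ : Measure (Euc d × Euc d)) :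
    Measure (Euc d × Euc d) :=
  (couplingInput K ρ).map (couplingStep U η)

/-- The expected squared distance between the two coordinates of a coupling. -/
def transportCost (ρ : Measure (Euc d × Euc d)) : ℝ≥0∞ := ∫⁻ p, ‖p.1 - p.2‖ₑ ^ 2 ∂ρ

lemma W2_le_transportCost_rpow {μ ν : Measure (Euc d)} (hfst : ρ.map Prod.fst = μ)
    (hsnd : ρ.map Prod.snd = ν) : W2 μ ν ≤ transportCost ρ ^ (1 / 2 : ℝ) :=
  iInf₂_le ρ ⟨hfst, hsnd⟩

lemma measurable_prlmcStep (hG : Continuous (gradient U)) :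
    Measurable fun q : Euc d × ((Fin K → ℝ) × (Fin K → Euc d) × Euc d) =>
      prlmcStep U η K q.1 q.2.1 q.2.2.1 q.2.2.2 := by
  unfold prlmcStep prlmcMid
  exact Continuous.measurable (by fun_prop)

lemma measurable_couplingStep (hU : Measurable U) (hG : Continuous (gradient U)) :
    Measurable (couplingStep (K := K) U η) := by
  have hmala : Measurable fun q :
      (Euc d × Euc d) × ((Fin K → ℝ) × (Fin K → Euc d) × Euc d) × unitInterval =>
        ((q.1.2, q.2.1.2.2), q.2.2) := by fun_prop
  have hprlmc : Measurable fun q :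
      (Euc d × Euc d) × ((Fin K → ℝ) × (Fin K → Euc d) × Euc d) × unitInterval =>
        (q.1.1, q.2.1) := by fun_prop
  exact ((measurable_prlmcStep hG).comp hprlmc).prodMk
    ((measurable_malaStep hU hG.measurable).comp hmala)

lemma measurePreserving_malaInput (hK : 1 ≤ K) [IsProbabilityMeasure ρ] {ν : Measure (Euc d)}
    [SFinite ν] (hsnd : ρ.map Prod.snd = ν) :
    MeasurePreserving (fun q => ((q.1.2, q.2.1.2.2), q.2.2)) (couplingInput K ρ)
      ((ν.prod (_root_.stdGaussian d)).prod volume) := by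
  have := isProbabilityMeasure_prlmcNoise (d := d) hK
  have hstate : MeasurePreserving Prod.snd ρ ν := ⟨measurable_snd, hsnd⟩
  exact (measurePreserving_prodAssoc ν (_root_.stdGaussian d) volume).symm.comp
    (hstate.prod ((measurePreserving_prlmcNoise_driving hK).prod (.id volume)))

lemma lintegral_enorm_sub_sq_couplingInput (hK : 1 ≤ K) [IsProbabilityMeasure ρ] :
    ∫⁻ q, ‖q.1.1 - q.1.2‖ₑ ^ 2 ∂couplingInput K ρ = transportCost ρ := by
  have := isProbabilityMeasure_prlmcNoise (d := d) hK
  exact measurePreserving_fst.lintegral_comp (f := fun p : Euc d × Euc d => ‖p.1 - p.2‖ₑ ^ 2)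
    (by fun_prop)

lemma lintegral_enorm_snd_sq_couplingInput (hK : 1 ≤ K) [IsProbabilityMeasure ρ]
    {ν : Measure (Euc d)} (hsnd : ρ.map Prod.snd = ν) :
    ∫⁻ q, ‖q.1.2‖ₑ ^ 2 ∂couplingInput K ρ = ∫⁻ y, ‖y‖ₑ ^ 2 ∂ν := by
  have := isProbabilityMeasure_prlmcNoise (d := d) hK
  have hstate : MeasurePreserving Prod.snd ρ ν := ⟨measurable_snd, hsnd⟩
  exact (hstate.comp measurePreserving_fst).lintegral_comp (f := fun y => ‖y‖ₑ ^ 2) (by fun_prop)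

lemma lintegral_sum_enorm_mid_sq_couplingInput (hK : 1 ≤ K) [IsProbabilityMeasure ρ] :
    ∫⁻ q, ∑ i, ‖q.2.1.2.1 i‖ₑ ^ 2 ∂couplingInput K ρ
      = K * ∫⁻ z, ‖z‖ₑ ^ 2 ∂(_root_.stdGaussian d) := by
  have := isProbabilityMeasure_prlmcNoise (d := d) hK
  have hmid (i : Fin K) : ∫⁻ q, ‖q.2.1.2.1 i‖ₑ ^ 2 ∂couplingInput K ρ
      = ∫⁻ z, ‖z‖ₑ ^ 2 ∂(_root_.stdGaussian d) :=
    ((measurePreserving_prlmcNoise_mid hK i).comp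
      (measurePreserving_fst.comp measurePreserving_snd)).lintegral_comp
        (f := fun z => ‖z‖ₑ ^ 2) (by fun_prop)
  rw [lintegral_finsetSum _ fun i _ => by fun_prop]
  simp [hmid]

lemma isProbabilityMeasure_nextCoupling (hK : 1 ≤ K) (hU : Measurable U)
    (hG : Continuous (gradient U)) [IsProbabilityMeasure ρ] :
    IsProbabilityMeasure (nextCoupling U K η ρ) := by
  have := isProbabilityMeasure_prlmcNoise (d := d) hK
  have : IsProbabilityMeasure (couplingInput K ρ) := by
    unfold couplingInput
    infer_instance
  exact Measure.isProbabilityMeasure_map (measurable_couplingStep hU hG).aemeasurable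

lemma map_snd_nextCoupling (hK : 1 ≤ K) (hU : Measurable U) (hG : Continuous (gradient U))
    (hη : 0 < η) [SFinite (gibbs U)] [IsProbabilityMeasure ρ] (hsnd : ρ.map Prod.snd = gibbs U) :
    (nextCoupling U K η ρ).map Prod.snd = gibbs U := by
  have hinput := measurePreserving_malaInput hK hsnd
  rw [nextCoupling, Measure.map_map measurable_snd (measurable_couplingStep hU hG)]
  conv_rhs => rw [← map_malaStep_gibbs hU hG.measurable hη, ← hinput.map_eq,
    Measure.map_map (measurable_malaStep hU hG.measurable) hinput.measurable]
  rfl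

lemma map_fst_nextCoupling (hK : 1 ≤ K) (hU : Measurable U) (hG : Continuous (gradient U))
    [IsProbabilityMeasure ρ] :
    (nextCoupling U K η ρ).map Prod.fst = (ρ.map Prod.fst).bind (prlmcKernel U η K) := by
  have := isProbabilityMeasure_prlmcNoise (d := d) hK
  have : IsProbabilityMeasure (ρ.map Prod.fst) :=
    Measure.isProbabilityMeasure_map measurable_fst.aemeasurable
  have hstate : MeasurePreserving Prod.fst ρ (ρ.map Prod.fst) := measurable_fst.measurePreserving ρ
  have hinput : MeasurePreserving (Prod.map Prod.fst Prod.fst) (couplingInput K ρ)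
      ((ρ.map Prod.fst).prod (prlmcNoise d K)) := hstate.prod measurePreserving_fst
  have hstep := measurable_prlmcStep (K := K) (η := η) hG
  calc (nextCoupling U K η ρ).map Prod.fst
      = ((ρ.map Prod.fst).prod (prlmcNoise d K)).map
          (fun q => prlmcStep U η K q.1 q.2.1 q.2.2.1 q.2.2.2) := by
        rw [nextCoupling, Measure.map_map measurable_fst (measurable_couplingStep hU hG),
          ← hinput.map_eq, Measure.map_map hstep hinput.measurable]
        rfl
    _ = (ρ.map Prod.fst).bind (prlmcKernel U η K) := (bind_map_curry _ hstep).symm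

end Coupling

section Convergence

variable {d K : ℕ} {U : Euc d → ℝ} {m L η : ℝ}

/-- The constant `b` in the bound `(1 - m η) * cost + η * b` for the transport cost after one
coupled step of size `η`; it gathers the midpoint corrections of PRLMC and the rejections of
MALA. -/
def couplingError (U : Euc d → ℝ) (m L : ℝ) (K : ℕ) (η : ℝ) : ℝ≥0∞ :=
  ENNReal.ofReal (2 * η + 4 / m)
    * (ENNReal.ofReal (4 * K ^ 2 * L ^ 4 * η ^ 2) * ∫⁻ y, ‖y‖ₑ ^ 2 ∂gibbs U
      + ENNReal.ofReal (4 * K * L ^ 2 * η) * (K * ∫⁻ z, ‖z‖ₑ ^ 2 ∂(_root_.stdGaussian d))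
      + rejectionCost U η / ENNReal.ofReal (η ^ 2))

lemma enorm_sq_le_ofReal_one_add_norm_sq {E : Type*} [SeminormedAddCommGroup E] (z : E) :
    ‖z‖ₑ ^ 2 ≤ ENNReal.ofReal ((1 + ‖z‖) ^ 2) := by
  rw [← ofReal_norm, ← ENNReal.ofReal_pow (norm_nonneg z)]
  gcongr
  linarith

lemma lintegral_enorm_sq_stdGaussian_lt_top :
    ∫⁻ z, ‖z‖ₑ ^ 2 ∂(_root_.stdGaussian d) < ∞ :=
  (lintegral_mono enorm_sq_le_ofReal_one_add_norm_sq).trans_lt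
    (lintegral_one_add_norm_pow_stdGaussian_lt_top 2)

namespace StrongAssumption

lemma lintegral_enorm_sq_gibbs_lt_top (hU : StrongAssumption U m L) :
    ∫⁻ y, ‖y‖ₑ ^ 2 ∂gibbs U < ∞ :=
  (lintegral_mono enorm_sq_le_ofReal_one_add_norm_sq).trans_lt
    (lintegral_one_add_norm_pow_gibbs_lt_top hU.continuous.measurable (half_pos hU.m_pos)
      hU.add_mul_norm_sq_le 2)

lemma couplingError_ne_top (hU : StrongAssumption U m L) (K : ℕ) (hη : 0 < η) :
    couplingError U m L K η ≠ ∞ := by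
  have hreject : rejectionCost U η / ENNReal.ofReal (η ^ 2) ≠ ∞ :=
    ENNReal.div_ne_top (hU.rejectionCost_ne_top hη) (by positivity)
  have hgibbs := hU.lintegral_enorm_sq_gibbs_lt_top.ne
  have hgauss := (lintegral_enorm_sq_stdGaussian_lt_top (d := d)).ne
  unfold couplingError
  finiteness

lemma tendsto_couplingError (hU : StrongAssumption U m L) (K : ℕ) :
    Tendsto (couplingError U m L K) (𝓝[>] 0) (𝓝 0) := by
  change Tendsto (fun η => couplingError U m L K η) _ _
  simp only [couplingError]
  have hcoef {f : ℝ → ℝ} (hf : Continuous f) :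
      Tendsto (fun η => ENNReal.ofReal (f η)) (𝓝[>] 0) (𝓝 (ENNReal.ofReal (f 0))) :=
    (ENNReal.tendsto_ofReal hf.continuousAt).mono_left nhdsWithin_le_nhds
  have hgibbs := ENNReal.Tendsto.mul_const
    (hcoef (f := fun η => 4 * K ^ 2 * L ^ 4 * η ^ 2) (by fun_prop))
    (.inr hU.lintegral_enorm_sq_gibbs_lt_top.ne)
  have hgauss := ENNReal.Tendsto.mul_const (hcoef (f := fun η => 4 * K * L ^ 2 * η) (by fun_prop))
    (.inr (ENNReal.mul_ne_top (ENNReal.natCast_ne_top K)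
      (lintegral_enorm_sq_stdGaussian_lt_top (d := d)).ne))
  have hsum : Tendsto (fun η => ENNReal.ofReal (4 * K ^ 2 * L ^ 4 * η ^ 2) * ∫⁻ y, ‖y‖ₑ ^ 2 ∂gibbs U
      + ENNReal.ofReal (4 * K * L ^ 2 * η) * (K * ∫⁻ z, ‖z‖ₑ ^ 2 ∂(_root_.stdGaussian d))
      + rejectionCost U η / ENNReal.ofReal (η ^ 2)) (𝓝[>] 0) (𝓝 0) := by
    simpa using (hgibbs.add hgauss).add hU.tendsto_rejectionCost_div
  simpa using ENNReal.Tendsto.mul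
    (hcoef (f := fun η => 2 * η + 4 / m) (by fun_prop)) (.inr ENNReal.zero_ne_top)
    hsum (.inr ENNReal.ofReal_ne_top)

lemma enorm_prlmcStep_sub_malaStep_sq_le (hU : StrongAssumption U m L) (hη : 0 < η)
    (x y z : Euc d) {h : Fin K → ℝ} (g : Fin K → Euc d) (u : unitInterval) (hh : ∀ i, |h i| ≤ 1) :
    ‖prlmcStep U η K x h g z - malaStep U η y z u‖ₑ ^ 2
      ≤ ENNReal.ofReal (contractionFactor m L K η) * ‖x - y‖ₑ ^ 2
        + ENNReal.ofReal η * (ENNReal.ofReal (2 * η + 4 / m)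
          * (ENNReal.ofReal (4 * K ^ 2 * L ^ 4 * η ^ 2) * ‖y‖ₑ ^ 2
            + ENNReal.ofReal (4 * K * L ^ 2 * η) * ∑ i, ‖g i‖ₑ ^ 2
            + ‖eulerProposal U η y z - malaStep U η y z u‖ₑ ^ 2 / ENNReal.ofReal (η ^ 2))) := by
  have hm := hU.m_pos
  have hL := hU.L_pos
  have hofReal (v : Euc d) : ‖v‖ₑ ^ 2 = ENNReal.ofReal (‖v‖ ^ 2) := by
    rw [ENNReal.ofReal_pow (norm_nonneg v), ofReal_norm]
  simp only [hofReal]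
  rw [← ENNReal.ofReal_sum_of_nonneg fun i _ => sq_nonneg _,
    ← ENNReal.ofReal_div_of_pos (by positivity), ← ENNReal.ofReal_mul' (sq_nonneg ‖x - y‖),
    ← ENNReal.ofReal_mul' (sq_nonneg ‖y‖),
    ← ENNReal.ofReal_mul (p := 4 * K * L ^ 2 * η) (by positivity),
    ← ENNReal.ofReal_add (by positivity) (by positivity),
    ← ENNReal.ofReal_add (by positivity) (by positivity),
    ← ENNReal.ofReal_mul (p := 2 * η + 4 / m) (by positivity), ← ENNReal.ofReal_mul hη.le,
    ← mul_assoc η]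
  exact (ENNReal.ofReal_le_ofReal
    (hU.norm_prlmcStep_sub_malaStep_sq_le hη x y z g u hh)).trans ENNReal.ofReal_add_le

lemma transportCost_nextCoupling_le (hU : StrongAssumption U m L) (hK : 1 ≤ K) (hη : 0 < η)
    (ρ : Measure (Euc d × Euc d)) [IsProbabilityMeasure ρ] (hsnd : ρ.map Prod.snd = gibbs U) :
    transportCost (nextCoupling U K η ρ)
      ≤ ENNReal.ofReal (contractionFactor m L K η) * transportCost ρ
        + ENNReal.ofReal η * couplingError U m L K η := by
  have := hU.isProbabilityMeasure_gibbs
  have := isProbabilityMeasure_prlmcNoise (d := d) hK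
  have hUm := hU.continuous.measurable
  have hG := hU.continuous_gradient
  have hdriver : MeasurePreserving (fun q => q.2.1) (couplingInput K ρ) (prlmcNoise d K) :=
    measurePreserving_fst.comp measurePreserving_snd
  have hinput := measurePreserving_malaInput hK hsnd
  have hreject := measurable_enorm_euler_sub_mala_sq (η := η) hUm hG.measurable
  calc transportCost (nextCoupling U K η ρ)
      = ∫⁻ q, ‖(couplingStep U η q).1 - (couplingStep U η q).2‖ₑ ^ 2 ∂couplingInput K ρ :=
        lintegral_map (by fun_prop) (measurable_couplingStep hUm hG)
    _ ≤ _ := lintegral_mono_ae <|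
        (hdriver.quasiMeasurePreserving.ae (ae_prlmcNoise_abs_le_one hK)).mono fun q hq =>
          hU.enorm_prlmcStep_sub_malaStep_sq_le hη _ _ _ _ q.2.2 hq
    _ = _ := by
        rw [lintegral_add_left (by fun_prop), lintegral_const_mul _ (by fun_prop),
          lintegral_const_mul' _ _ ENNReal.ofReal_ne_top,
          lintegral_const_mul' _ _ ENNReal.ofReal_ne_top,
          lintegral_add_left (by fun_prop), lintegral_add_left (by fun_prop),
          lintegral_const_mul' _ _ ENNReal.ofReal_ne_top,
          lintegral_const_mul' _ _ ENNReal.ofReal_ne_top,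
          lintegral_enorm_sub_sq_couplingInput hK, lintegral_enorm_snd_sq_couplingInput hK hsnd,
          lintegral_sum_enorm_mid_sq_couplingInput hK, couplingError, rejectionCost,
          ← hinput.lintegral_comp hreject]
        simp only [div_eq_mul_inv]
        rw [lintegral_mul_const' _ _ (ENNReal.inv_ne_top.2 (by positivity))]

end StrongAssumption

/-- The coupling of the law of the `n`-th PRLMC iterate with the Gibbs measure obtained by running
PRLMC and MALA jointly from the independent coupling. -/
def couplingIter (U : Euc d → ℝ) (K : ℕ) (γ : ℕ → ℝ) (μ : Measure (Euc d)) :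
    ℕ → Measure (Euc d × Euc d)
  | 0 => μ.prod (gibbs U)
  | n + 1 => nextCoupling U K (γ (n + 1)) (couplingIter U K γ μ n)

variable {γ : ℕ → ℝ} {μ : Measure (Euc d)} [IsProbabilityMeasure μ]

lemma isProbabilityMeasure_couplingIter (hU : StrongAssumption U m L) (hK : 1 ≤ K) (n : ℕ) :
    IsProbabilityMeasure (couplingIter U K γ μ n) := by
  induction n with
  | zero =>
    have := hU.isProbabilityMeasure_gibbs
    rw [couplingIter]
    infer_instance
  | succ n _ =>
    exact isProbabilityMeasure_nextCoupling hK hU.continuous.measurable hU.continuous_gradient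

lemma map_snd_couplingIter (hU : StrongAssumption U m L) (hK : 1 ≤ K) (hpos : ∀ n, 0 < γ n)
    (n : ℕ) : (couplingIter U K γ μ n).map Prod.snd = gibbs U := by
  have := hU.isProbabilityMeasure_gibbs
  induction n with
  | zero => exact measurePreserving_snd.map_eq
  | succ n ih =>
    have := isProbabilityMeasure_couplingIter (γ := γ) (μ := μ) hU hK n
    exact map_snd_nextCoupling hK hU.continuous.measurable hU.continuous_gradient (hpos _) ih

lemma map_fst_couplingIter (hU : StrongAssumption U m L) (hK : 1 ≤ K) (n : ℕ) :
    (couplingIter U K γ μ n).map Prod.fst = prlmcIterVar U K γ μ n := by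
  have := hU.isProbabilityMeasure_gibbs
  induction n with
  | zero => exact measurePreserving_fst.map_eq
  | succ n ih =>
    have := isProbabilityMeasure_couplingIter (γ := γ) (μ := μ) hU hK n
    rw [couplingIter, prlmcIterVar, ← ih]
    exact map_fst_nextCoupling hK hU.continuous.measurable hU.continuous_gradient

lemma transportCost_prod_ne_top {ν : Measure (Euc d)} [IsProbabilityMeasure ν]
    (hμ : ∫⁻ y, ‖y‖ₑ ^ 2 ∂μ ≠ ∞) (hν : ∫⁻ y, ‖y‖ₑ ^ 2 ∂ν ≠ ∞) :
    transportCost (μ.prod ν) ≠ ∞ := by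
  have hfst : ∫⁻ p, ‖p.1‖ₑ ^ 2 ∂μ.prod ν = ∫⁻ y, ‖y‖ₑ ^ 2 ∂μ :=
    measurePreserving_fst.lintegral_comp (f := fun y => ‖y‖ₑ ^ 2) (by fun_prop)
  have hsnd : ∫⁻ p, ‖p.2‖ₑ ^ 2 ∂μ.prod ν = ∫⁻ y, ‖y‖ₑ ^ 2 ∂ν :=
    measurePreserving_snd.lintegral_comp (f := fun y => ‖y‖ₑ ^ 2) (by fun_prop)
  have hsq (a b : Euc d) : ‖a - b‖ₑ ^ 2 ≤ 2 * (‖a‖ₑ ^ 2 + ‖b‖ₑ ^ 2) := by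
    refine (pow_le_pow_left' enorm_sub_le 2).trans ?_
    have h := ENNReal.rpow_add_le_mul_rpow_add_rpow ‖a‖ₑ ‖b‖ₑ one_le_two
    rw [show (2 : ℝ) - 1 = 1 by norm_num] at h
    simpa using h
  refine ne_top_of_le_ne_top ?_ (lintegral_mono fun p : Euc d × Euc d => hsq p.1 p.2)
  rw [lintegral_const_mul _ (by fun_prop), lintegral_add_left (by fun_prop), hfst, hsnd]
  finiteness

lemma tendsto_transportCost_couplingIter (hU : StrongAssumption U m L) (hK : 1 ≤ K)
    (hpos : ∀ n, 0 < γ n) (hlim : Tendsto γ atTop (𝓝 0)) (hdiv : ¬ Summable γ)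
    (hμ : ∫⁻ y, ‖y‖ₑ ^ 2 ∂μ ≠ ∞) :
    Tendsto (fun n => transportCost (couplingIter U K γ μ n)) atTop (𝓝 0) := by
  have := hU.isProbabilityMeasure_gibbs
  have hstep : Tendsto (fun n => γ (n + 1)) atTop (𝓝[>] 0) :=
    tendsto_nhdsWithin_iff.2 ⟨hlim.comp (tendsto_add_atTop_nat 1), .of_forall fun n => hpos _⟩
  exact tendsto_zero_of_le_ofReal_mul_add (a := fun n => γ (n + 1)) hU.m_pos
    (transportCost_prod_ne_top hμ hU.lintegral_enorm_sq_gibbs_lt_top.ne)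
    (fun n => hU.couplingError_ne_top K (hpos (n + 1))) (fun n => (hpos (n + 1)).le)
    ((summable_nat_add_iff 1).not.2 hdiv) (hstep.mono_right nhdsWithin_le_nhds)
    ((hU.tendsto_couplingError K).comp hstep)
    (hstep.eventually (eventually_contractionFactor_le hU.m_pos L K)) fun n =>
      have := isProbabilityMeasure_couplingIter (γ := γ) (μ := μ) hU hK n
      hU.transportCost_nextCoupling_le hK (hpos _) _ (map_snd_couplingIter hU hK hpos n)

end Convergence

theorem stmt6_general {d K : ℕ} (hK : 1 ≤ K) {m L : ℝ} {U : Euc d → ℝ}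
    (hU : StrongAssumption U m L) {γ : ℕ → ℝ} (hpos : ∀ n, 0 < γ n)
    (hlim : Tendsto γ atTop (𝓝 0)) (hdiv : ¬ Summable γ) {μ : Measure (Euc d)}
    [IsProbabilityMeasure μ] (hμ : ∫⁻ y, ‖y‖ₑ ^ 2 ∂μ ≠ ∞) :
    Tendsto (fun n => W2 (prlmcIterVar U K γ μ n) (gibbs U)) atTop (𝓝 0) := by
  have hcost := tendsto_transportCost_couplingIter hU hK hpos hlim hdiv hμ
  have hroot : Tendsto (fun n => transportCost (couplingIter U K γ μ n) ^ (1 / 2 : ℝ))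
      atTop (𝓝 0) := by
    simpa using hcost.ennrpow_const (1 / 2)
  exact tendsto_of_tendsto_of_tendsto_of_le_of_le tendsto_const_nhds hroot (fun _ => zero_le)
    fun n => W2_le_transportCost_rpow (map_fst_couplingIter hU hK n)
      (map_snd_couplingIter hU hK hpos n)

/-- Under Assumptions 1 and 3, for a non-increasing positive step sequence
with `γ₁ ≤ 1/(m+L)`, `γ_n → 0` and `∑ γ_n = ∞`, the decreasing-step PRLMC converges to `π`
in 2-Wasserstein distance. -/
theorem stmt6 (d K : ℕ) (hK : 1 ≤ K) (m L Lt : ℝ) (U : Euc d → ℝ)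
    (hU : StrongAssumption U m L) (hU3 : ThirdDerivBounded U Lt)
    (γ : ℕ → ℝ) (hpos : ∀ n, 0 < γ n) (hmono : Antitone γ)
    (hγ1 : γ 1 ≤ 1 / (m + L)) (hlim : Tendsto γ atTop (𝓝 0)) (hdiv : ¬ Summable γ)
    (x : Euc d) :
    Tendsto (fun n : ℕ => W2 (prlmcIterVar U K γ (Measure.dirac x) n) (gibbs U))
      atTop (𝓝 0) := by
  refine stmt6_general hK hU hpos hlim hdiv (μ := Measure.dirac x) ?_
  simp [lintegral_dirac]

end
end

section
/- Let (γ_n)_{n≥1} be a non-increasing positive sequence with ω := limsup_{n→∞} (γ_n − γ_{n+1})/γ_{n+1}² < ∞, and let m > 2ω. Define t_n = Σ_{k=1}^n γ_k, u_0 = 0 and u_n = Σ_{k=1}^n γ_k² e^{−(m/2)(t_n − t_k)} for n ≥ 1. Then (i) limsup_{n→∞} u_n / γ_n < ∞, and (ii) lim_{n→∞} e^{−m t_n} / γ_n = 0. -/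
open MeasureTheory ProbabilityTheory Filter
open scoped ENNReal NNReal RealInnerProductSpace Topology BigOperators

noncomputable section

/-!
The decrement condition gives `γ n / γ (n + 1) ≤ 1 + w * γ (n + 1) ≤ exp (w * γ (n + 1))`, so
`γ n * exp (w * t n)` is eventually nondecreasing and `γ n` is eventually at least a positive
multiple of `exp (-w * t n)`. Hence `∑ γ n` diverges, since otherwise `t n` would be bounded and
`γ n` would stay away from `0`. Then `exp (-m * t n) / γ n` is at most a multiple of
`exp (-(m - w) * t n)`, which gives (ii). For (i), the quotients `r n = u n / γ n` satisfy
`r (n + 1) ≤ exp (-δ * γ (n + 1)) * r n + γ (n + 1)` with `δ = m / 2 - w > 0`, and every upper bound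
that is at least `1 / δ + sup γ` is preserved by this recursion.
-/

section RealInequalities

variable {x y w δ M : ℝ}

theorem le_mul_exp_of_sub_div_sq_le (hy : 0 < y) (h : (x - y) / y ^ 2 ≤ w) :
    x ≤ y * Real.exp (w * y) := by
  have hxy : x - y ≤ w * y ^ 2 := (div_le_iff₀ (by positivity)).1 h
  calc
    x ≤ y * (w * y + 1) := by linarith
    _ ≤ y * Real.exp (w * y) := by gcongr; exact Real.add_one_le_exp _

theorem exp_neg_mul_mul_add_le (hδ : 0 < δ) (hx : 0 ≤ x) (hM : 1 / δ + x ≤ M) :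
    Real.exp (-δ * x) * M + x ≤ M := by
  have hM₀ : 0 ≤ M := by linarith [one_div_pos.2 hδ]
  have hp : 0 < 1 + δ * x := by positivity
  have hexp : Real.exp (-δ * x) ≤ 1 / (1 + δ * x) := by
    rw [neg_mul, Real.exp_neg, ← one_div]
    exact one_div_le_one_div_of_le hp (by linarith [Real.add_one_le_exp (δ * x)])
  have hδM : 1 + δ * x ≤ δ * M := by
    calc
      1 + δ * x = δ * (1 / δ + x) := by field_simp
      _ ≤ δ * M := by gcongr
  calc
    Real.exp (-δ * x) * M + x ≤ 1 / (1 + δ * x) * M + x := by gcongr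
    _ = (M + x * (1 + δ * x)) / (1 + δ * x) := by field_simp
    _ ≤ (M + x * (δ * M)) / (1 + δ * x) := by gcongr
    _ = M := by field_simp

end RealInequalities

theorem exists_eventually_le_of_le_exp_neg_mul_add {r g : ℕ → ℝ} {δ : ℝ} (hδ : 0 < δ)
    (hg : ∀ n, 0 ≤ g n) (hbdd : BddAbove (Set.range g))
    (hr : ∀ᶠ n in atTop, r (n + 1) ≤ Real.exp (-δ * g (n + 1)) * r n + g (n + 1)) :
    ∃ M, ∀ᶠ n in atTop, r n ≤ M := by
  obtain ⟨B, hB⟩ := hbdd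
  obtain ⟨N, hN⟩ := eventually_atTop.1 hr
  refine ⟨max (r N) (1 / δ + B), eventually_atTop.2 ⟨N, fun n hn => ?_⟩⟩
  induction n, hn using Nat.le_induction with
  | base => exact le_max_left _ _
  | succ n hn ih =>
    have hgB : g (n + 1) ≤ B := hB (Set.mem_range_self _)
    calc
      r (n + 1) ≤ Real.exp (-δ * g (n + 1)) * r n + g (n + 1) := hN n hn
      _ ≤ Real.exp (-δ * g (n + 1)) * max (r N) (1 / δ + B) + g (n + 1) := by gcongr
      _ ≤ max (r N) (1 / δ + B) :=
        exp_neg_mul_mul_add_le hδ (hg _) (le_trans (by gcongr) (le_max_right _ _))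

section CumulativeTime

variable {γ : ℕ → ℝ} {w m : ℝ}

theorem tseq_succ (γ : ℕ → ℝ) (n : ℕ) : tseq γ (n + 1) = tseq γ n + γ (n + 1) :=
  Finset.sum_Icc_succ_top (Nat.le_add_left 1 n) γ

theorem tseq_eq_sum_range (γ : ℕ → ℝ) (n : ℕ) : tseq γ n = ∑ k ∈ Finset.range n, γ (k + 1) := by
  induction n with
  | zero => simp [tseq]
  | succ n ih => rw [tseq_succ, ih, Finset.sum_range_succ]

theorem tendsto_tseq_tsum (hγ : Summable γ) :
    Tendsto (tseq γ) atTop (𝓝 (∑' k, γ (k + 1))) := by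
  rw [funext (tseq_eq_sum_range γ)]
  exact ((summable_nat_add_iff 1).2 hγ).hasSum.tendsto_sum_nat

theorem tendsto_tseq_atTop (hγ : ∀ n, 0 ≤ γ n) (hdiv : ¬ Summable γ) :
    Tendsto (tseq γ) atTop atTop := by
  rw [funext (tseq_eq_sum_range γ)]
  exact (not_summable_iff_tendsto_nat_atTop_of_nonneg fun n => hγ (n + 1)).1
    (mt (summable_nat_add_iff 1).1 hdiv)

theorem exists_pos_eventually_le_mul_exp_tseq (hpos : ∀ n, 0 < γ n)
    (hγ : ∀ᶠ n in atTop, γ n ≤ γ (n + 1) * Real.exp (w * γ (n + 1))) :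
    ∃ c > 0, ∀ᶠ n in atTop, c ≤ γ n * Real.exp (w * tseq γ n) := by
  obtain ⟨N, hN⟩ := eventually_atTop.1 hγ
  refine ⟨γ N * Real.exp (w * tseq γ N), mul_pos (hpos N) (Real.exp_pos _),
    eventually_atTop.2 ⟨N, fun n hn => ?_⟩⟩
  induction n, hn using Nat.le_induction with
  | base => exact le_rfl
  | succ n hn ih =>
    calc
      _ ≤ γ n * Real.exp (w * tseq γ n) := ih
      _ ≤ γ (n + 1) * Real.exp (w * γ (n + 1)) * Real.exp (w * tseq γ n) := by
        gcongr; exact hN n hn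
      _ = γ (n + 1) * Real.exp (w * tseq γ (n + 1)) := by
        rw [mul_assoc, ← Real.exp_add, tseq_succ, ← mul_add, add_comm (γ (n + 1))]

theorem not_summable_of_le_mul_exp (hpos : ∀ n, 0 < γ n)
    (hγ : ∀ᶠ n in atTop, γ n ≤ γ (n + 1) * Real.exp (w * γ (n + 1))) : ¬ Summable γ := by
  intro hsum
  obtain ⟨c, hc, hle⟩ := exists_pos_eventually_le_mul_exp_tseq hpos hγ
  have hlim : Tendsto (fun n => γ n * Real.exp (w * tseq γ n)) atTop (𝓝 0) := by
    simpa only [zero_mul] using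
      hsum.tendsto_atTop_zero.mul ((tendsto_tseq_tsum hsum).const_mul w).rexp
  exact hc.not_ge (ge_of_tendsto hlim hle)

theorem tendsto_exp_neg_mul_tseq_div (hpos : ∀ n, 0 < γ n)
    (hγ : ∀ᶠ n in atTop, γ n ≤ γ (n + 1) * Real.exp (w * γ (n + 1))) (hwm : w < m) :
    Tendsto (fun n => Real.exp (-m * tseq γ n) / γ n) atTop (𝓝 0) := by
  obtain ⟨c, hc, hle⟩ := exists_pos_eventually_le_mul_exp_tseq hpos hγ
  have ht : Tendsto (tseq γ) atTop atTop :=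
    tendsto_tseq_atTop (fun n => (hpos n).le) (not_summable_of_le_mul_exp hpos hγ)
  have hlim : Tendsto (fun n => Real.exp (-((m - w) * tseq γ n)) / c) atTop (𝓝 0) := by
    simpa only [zero_div, Function.comp_def] using (Real.tendsto_exp_neg_atTop_nhds_zero.comp
      (ht.const_mul_atTop (sub_pos.2 hwm))).div_const c
  refine squeeze_zero' (.of_forall fun n => (div_pos (Real.exp_pos _) (hpos n)).le) ?_ hlim
  filter_upwards [hle] with n hn
  rw [div_le_div_iff₀ (hpos n) hc]
  calc
    Real.exp (-m * tseq γ n) * c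
        ≤ Real.exp (-m * tseq γ n) * (γ n * Real.exp (w * tseq γ n)) := by gcongr
    _ = Real.exp (-m * tseq γ n) * Real.exp (w * tseq γ n) * γ n := by ring
    _ = Real.exp (-((m - w) * tseq γ n)) * γ n := by rw [← Real.exp_add]; ring_nf

end CumulativeTime

/-- The sum `u_n = ∑_{k=1}^n γ_k² e^{-a (t_n - t_k)}` of squared steps, discounted at rate `a` over
the cumulative time elapsed since each of them; the theorem concerns `a = m / 2`. -/
def discountedSqSum (γ : ℕ → ℝ) (a : ℝ) (n : ℕ) : ℝ :=
  ∑ k ∈ Finset.Icc 1 n, γ k ^ 2 * Real.exp (-a * (tseq γ n - tseq γ k))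

section DiscountedSqSum

variable {γ : ℕ → ℝ} {a w : ℝ}

theorem discountedSqSum_nonneg (γ : ℕ → ℝ) (a : ℝ) (n : ℕ) : 0 ≤ discountedSqSum γ a n :=
  Finset.sum_nonneg fun _ _ => by positivity

theorem discountedSqSum_succ (γ : ℕ → ℝ) (a : ℝ) (n : ℕ) :
    discountedSqSum γ a (n + 1) =
      Real.exp (-a * γ (n + 1)) * discountedSqSum γ a n + γ (n + 1) ^ 2 := by
  have hexp (k : ℕ) : Real.exp (-a * (tseq γ (n + 1) - tseq γ k)) =
      Real.exp (-a * γ (n + 1)) * Real.exp (-a * (tseq γ n - tseq γ k)) := by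
    rw [← Real.exp_add, tseq_succ]
    ring_nf
  simp only [discountedSqSum]
  rw [Finset.sum_Icc_succ_top (Nat.le_add_left 1 n), sub_self, mul_zero, Real.exp_zero, mul_one,
    Finset.mul_sum]
  simp only [hexp, mul_left_comm]

theorem discountedSqSum_succ_div_le {n : ℕ} (hn : 0 < γ n) (hn' : 0 < γ (n + 1))
    (hγ : γ n ≤ γ (n + 1) * Real.exp (w * γ (n + 1))) :
    discountedSqSum γ a (n + 1) / γ (n + 1) ≤
      Real.exp (-(a - w) * γ (n + 1)) * (discountedSqSum γ a n / γ n) + γ (n + 1) := by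
  have hu : discountedSqSum γ a n / γ (n + 1) ≤
      discountedSqSum γ a n / γ n * Real.exp (w * γ (n + 1)) := by
    rw [div_mul_eq_mul_div, div_le_div_iff₀ hn' hn, mul_assoc, mul_comm (Real.exp _)]
    exact mul_le_mul_of_nonneg_left hγ (discountedSqSum_nonneg γ a n)
  calc
    discountedSqSum γ a (n + 1) / γ (n + 1)
        = Real.exp (-a * γ (n + 1)) * (discountedSqSum γ a n / γ (n + 1)) + γ (n + 1) := by
      rw [discountedSqSum_succ]; field_simp
    _ ≤ Real.exp (-a * γ (n + 1)) *
          (discountedSqSum γ a n / γ n * Real.exp (w * γ (n + 1))) + γ (n + 1) := by gcongr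
    _ = Real.exp (-(a - w) * γ (n + 1)) * (discountedSqSum γ a n / γ n) + γ (n + 1) := by
      rw [mul_left_comm, ← Real.exp_add, mul_comm]; ring_nf

theorem exists_eventually_discountedSqSum_div_le (hpos : ∀ n, 0 < γ n)
    (hbdd : BddAbove (Set.range γ))
    (hγ : ∀ᶠ n in atTop, γ n ≤ γ (n + 1) * Real.exp (w * γ (n + 1))) (hwa : w < a) :
    ∃ M, ∀ᶠ n in atTop, discountedSqSum γ a n / γ n ≤ M :=
  exists_eventually_le_of_le_exp_neg_mul_add (sub_pos.2 hwa) (fun n => (hpos n).le) hbdd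
    (hγ.mono fun n hn => discountedSqSum_succ_div_le (hpos n) (hpos (n + 1)) hn)

end DiscountedSqSum

theorem stmt16_general (γ : ℕ → ℝ) (m : ℝ) (hm : 0 < m)
    (hpos : ∀ n, 0 < γ n) (hbdd : BddAbove (Set.range γ))
    (w : ℝ) (hw : ∀ᶠ n in atTop, (γ n - γ (n + 1)) / (γ (n + 1)) ^ 2 ≤ w)
    (hwm : 2 * w < m) :
    (∃ M : ℝ, ∀ᶠ n in atTop, discountedSqSum γ (m / 2) n / γ n ≤ M) ∧
    Tendsto (fun n : ℕ => Real.exp (-m * tseq γ n) / γ n) atTop (𝓝 0) := by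
  have hγ : ∀ᶠ n in atTop, γ n ≤ γ (n + 1) * Real.exp (w * γ (n + 1)) :=
    hw.mono fun n hn => le_mul_exp_of_sub_div_sq_le (hpos (n + 1)) hn
  exact ⟨exists_eventually_discountedSqSum_div_le hpos hbdd hγ (by linarith),
    tendsto_exp_neg_mul_tseq_div hpos hγ (by linarith)⟩

/-- For a non-increasing positive step sequence with
`ω = limsup (γ_n − γ_{n+1})/γ_{n+1}² < ∞` and `m > 2ω`:
(i) `limsup u_n/γ_n < ∞` where `u_n = ∑_{k=1}^n γ_k² e^{−(m/2)(t_n − t_k)}`, and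
(ii) `e^{−m t_n}/γ_n → 0`. -/
theorem stmt16 (γ : ℕ → ℝ) (m : ℝ) (hm : 0 < m)
    (hpos : ∀ n, 0 < γ n) (hmono : Antitone γ)
    (hlim : Tendsto γ atTop (𝓝 0)) (hdiv : ¬ Summable γ)
    (w : ℝ) (hw : ∀ᶠ n in atTop, (γ n - γ (n + 1)) / (γ (n + 1)) ^ 2 ≤ w)
    (hwm : 2 * w < m) :
    (∃ M : ℝ, ∀ᶠ n in atTop,
      (∑ k ∈ Finset.Icc 1 n, (γ k) ^ 2 * Real.exp (-(m / 2) * (tseq γ n - tseq γ k))) / γ n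
        ≤ M) ∧
    Tendsto (fun n : ℕ => Real.exp (-m * tseq γ n) / γ n) atTop (𝓝 0) := by
  have hbdd : BddAbove (Set.range γ) := ⟨γ 0, Set.forall_mem_range.2 fun n => hmono n.zero_le⟩
  exact stmt16_general γ m hm hpos hbdd w hw hwm

end
end
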